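/- arXiv:1708.05218 — 4 statements merged into one kernel-verified Lean document; each statement's English description precedes it below -/
import Mathlib

section
/- Let Y be a real Banach space with the Daugavet property. Then there exist convex, closed, bounded, symmetric (i.e., W = −W) SCD sets W₁, W₂ ⊂ Y such that the intersection W₁ ∩ W₂ is nonempty and is not SCD. -/
open Bornology Set Pointwise

variable {X : Type*} [NormedAddCommGroup X] [NormedSpace ℝ X]

/-- The sliceSet of `A` given by the functional `f` and `ε > 0`. -/
noncomputable def sliceSet (A : Set X) (f : X →L[ℝ] ℝ) (ε : ℝ) : Set X :=
  {x ∈ A | sSup (f '' A) - ε < f x}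

/-- `S` is a sliceSet of `A`: a nonempty set of the form `sliceSet A f ε` with `f ≠ 0`, `ε > 0`. -/
def IsSlice (A S : Set X) : Prop :=
  S.Nonempty ∧ ∃ f : X →L[ℝ] ℝ, f ≠ 0 ∧ ∃ ε : ℝ, 0 < ε ∧ S = sliceSet A f ε

/-- A sequence of subsets of `A` is determining if every set `B` meeting all of them
has `A` inside the closed convex hull of `B`. -/
def Determining (A : Set X) (V : ℕ → Set X) : Prop :=
  ∀ B : Set X, (∀ n, (B ∩ V n).Nonempty) → A ⊆ closure (convexHull ℝ B)

/-- A bounded set is slicely countably determined if it has a determining sequence of slices. -/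
def IsSCD (A : Set X) : Prop :=
  ∃ V : ℕ → Set X, (∀ n, IsSlice A (V n)) ∧ Determining A V

/-- The Daugavet property: every rank-one operator `x ↦ f x • y` satisfies the
Daugavet equation `‖Id + T‖ = 1 + ‖T‖`. -/
def DaugavetProperty (X : Type*) [NormedAddCommGroup X] [NormedSpace ℝ X] : Prop :=
  ∀ (f : X →L[ℝ] ℝ) (y : X),
    ‖ContinuousLinearMap.id ℝ X + f.smulRight y‖ = 1 + ‖f.smulRight y‖



section aux
variable {Y : Type*} [NormedAddCommGroup Y] [NormedSpace ℝ Y]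

lemma dg_slice (h : DaugavetProperty Y) (f : Y →L[ℝ] ℝ) (hf : ‖f‖ = 1) (δ : ℝ) (hδ : 0 < δ)
    (x : Y) (hx : ‖x‖ = 1) :
    ∃ (f₁ : Y →L[ℝ] ℝ) (δ₁ : ℝ), ‖f₁‖ = 1 ∧ 0 < δ₁ ∧ ∀ y : Y, ‖y‖ ≤ 1 → 1 - δ₁ < f₁ y →
      1 - δ < f y ∧ 2 - δ < ‖x + y‖ := by
  obtain ⟨ε, hε, hε1, hεδ⟩ : ∃ ε : ℝ, 0 < ε ∧ ε < 1/2 ∧ 6 * ε < δ :=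
    ⟨min (1/4) (δ/12), by positivity, by have := min_le_left (1/4) (δ/12); linarith,
      by have := min_le_right (1/4) (δ/12); linarith⟩
  have hT := h f x
  have hn : ‖f.smulRight x‖ = 1 := by
    rw [ContinuousLinearMap.norm_smulRight_apply, hf, hx, one_mul]
  rw [hn] at hT
  have h2 : 2 - ε < ‖ContinuousLinearMap.id ℝ Y + f.smulRight x‖ := by rw [hT]; linarith
  obtain ⟨z, hz1, hz2⟩ := ContinuousLinearMap.exists_lt_apply_of_lt_opNorm _ h2
  obtain ⟨g0, hg0, hg0z⟩ := exists_dual_vector'' ℝ ((ContinuousLinearMap.id ℝ Y + f.smulRight x) z)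
  have key : ∃ (g : Y →L[ℝ] ℝ) (z : Y), ‖g‖ ≤ 1 ∧ ‖z‖ ≤ 1 ∧ 0 ≤ f z ∧ 2 - ε < g z + f z * g x := by
    have e1 : 2 - ε < g0 z + f z * g0 x := by
      have : g0 ((ContinuousLinearMap.id ℝ Y + f.smulRight x) z) = g0 z + f z * g0 x := by
        simp
      rw [← this, hg0z]; exact hz2
    rcases le_total 0 (f z) with h0 | h0
    · exact ⟨g0, z, hg0, hz1.le, h0, e1⟩
    · refine ⟨-g0, -z, by simpa using hg0, by simpa using hz1.le, by simpa using h0, ?_⟩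
      simpa using e1
  obtain ⟨g, z, hg, hz, hfz0, hgz⟩ := key
  have b1 : ∀ v : Y, ‖v‖ ≤ 1 → g v ≤ 1 := fun v hv => by
    have := g.le_opNorm v
    have h3 := le_abs_self (g v)
    rw [Real.norm_eq_abs] at this
    nlinarith [norm_nonneg v, norm_nonneg g]
  have b2 : ∀ v : Y, ‖v‖ ≤ 1 → f v ≤ 1 := fun v hv => by
    have := f.le_opNorm v
    have h3 := le_abs_self (f v)
    rw [Real.norm_eq_abs, hf] at this
    nlinarith [norm_nonneg v]
  have hgz1 := b1 z hz
  have hgx1 := b1 x hx.le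
  have hfz1 := b2 z hz
  have hgx : 1 - ε < g x := by nlinarith
  have hfz : 1 - ε < f z := by nlinarith
  have hgz' : 1 - ε < g z := by nlinarith
  have hN : 2 - 2 * ε ≤ ‖f + g‖ := by
    have := (f + g).le_opNorm z
    have h3 := le_abs_self ((f + g) z)
    rw [Real.norm_eq_abs] at this
    have h4 : (f + g) z = f z + g z := rfl
    nlinarith [norm_nonneg (f + g)]
  have hNpos : 0 < ‖f + g‖ := by linarith
  refine ⟨‖f + g‖⁻¹ • (f + g), ε, ?_, hε, ?_⟩
  · rw [norm_smul, norm_inv, norm_norm, inv_mul_cancel₀ hNpos.ne']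
  · intro y hy hy1
    have hy2 : (1 - ε) * ‖f + g‖ < f y + g y := by
      have h5 : (‖f + g‖⁻¹ • (f + g)) y = (f y + g y) / ‖f + g‖ := by
        simp [div_eq_inv_mul, mul_add]
      rw [h5, lt_div_iff₀ hNpos] at hy1
      exact hy1
    have hgy := b1 y hy
    have hfy := b2 y hy
    have h6 : 2 - 4 * ε < f y + g y := by nlinarith
    refine ⟨by linarith, ?_⟩
    have h7 : g (x + y) ≤ ‖x + y‖ := by
      have := g.le_opNorm (x + y)
      have h3 := le_abs_self (g (x + y))
      rw [Real.norm_eq_abs] at this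
      nlinarith [norm_nonneg (x + y)]
    rw [map_add] at h7
    linarith

lemma dg_slice_finset (h : DaugavetProperty Y) (t : Finset Y) : (∀ x ∈ t, ‖x‖ = 1) →
    ∀ (f : Y →L[ℝ] ℝ) (_ : ‖f‖ = 1) (δ : ℝ) (_ : 0 < δ) (η : ℝ) (_ : 0 < η),
    ∃ (f₁ : Y →L[ℝ] ℝ) (δ₁ : ℝ), ‖f₁‖ = 1 ∧ 0 < δ₁ ∧ ∀ y : Y, ‖y‖ ≤ 1 → 1 - δ₁ < f₁ y →
      1 - δ < f y ∧ ∀ x ∈ t, 2 - η < ‖x + y‖ := by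
  classical
  induction t using Finset.induction_on with
  | empty => intro _ f hf δ hδ η hη; exact ⟨f, δ, hf, hδ, fun y _ h => ⟨h, by simp⟩⟩
  | insert a t ha ih =>
    intro hx f hf δ hδ η hη
    obtain ⟨f₁, δ₁, h1, h2, h3⟩ := ih (fun x hxt => hx x (by simp [hxt])) f hf δ hδ η hη
    obtain ⟨f₂, δ₂, h4, h5, h6⟩ := dg_slice h f₁ h1 (min δ₁ η) (lt_min h2 hη) a (hx a (by simp))
    refine ⟨f₂, δ₂, h4, h5, fun y hy hy2 => ?_⟩
    obtain ⟨h7, h8⟩ := h6 y hy hy2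
    have m1 := min_le_left δ₁ η
    have m2 := min_le_right δ₁ η
    obtain ⟨h9, h10⟩ := h3 y hy (by linarith)
    refine ⟨h9, fun x hx => ?_⟩
    rcases Finset.mem_insert.1 hx with rfl | hx
    · linarith
    · exact h10 x hx

/-- `y` is almost `ℓ₁`-orthogonal to the span of `E`. -/
def PL (E : Finset Y) (c : ℝ) (y : Y) : Prop :=
  ∀ e ∈ Submodule.span ℝ (E : Set Y), ∀ t : ℝ, c * (‖e‖ + |t|) ≤ ‖e + t • y‖

lemma PL.mono {E E' : Finset Y} {c c' : ℝ} {y : Y} (h : PL E' c' y) (hE : E ⊆ E') (hc : c ≤ c') :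
    PL E c y := fun e he t =>
  (mul_le_mul_of_nonneg_right hc (by positivity)).trans
    (h e (Submodule.span_mono (by exact_mod_cast hE) he) t)

lemma dg_PL1 (h : DaugavetProperty Y) (E : Finset Y) (c : ℝ) (hc1 : c < 1)
    (f : Y →L[ℝ] ℝ) (hf : ‖f‖ = 1) (δ : ℝ) (hδ : 0 < δ) :
    ∃ y : Y, ‖y‖ ≤ 1 ∧ 1 - δ < f y ∧ PL E c y := by
  classical
  obtain ⟨η, hη, hη1, hηc⟩ : ∃ η : ℝ, 0 < η ∧ η ≤ 1 ∧ η ≤ 1 - c :=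
    ⟨min 1 (1 - c), lt_min one_pos (by linarith), min_le_left _ _, min_le_right _ _⟩
  let S := Submodule.span ℝ (E : Set Y)
  have : FiniteDimensional ℝ S := FiniteDimensional.span_finset ℝ E
  have : ProperSpace S := FiniteDimensional.proper ℝ S
  have hcomp : IsCompact (Metric.sphere (0 : S) 1) := isCompact_sphere _ _
  obtain ⟨t, ht1, ht2, ht3⟩ := hcomp.finite_cover_balls (e := η/2) (by positivity)
  obtain ⟨f₁, δ₁, h1, h2, h3⟩ := dg_slice_finset h (ht2.toFinset.image (fun x : S => (x : Y)))
    (by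
      intro x hx
      obtain ⟨a, ha, rfl⟩ := Finset.mem_image.1 hx
      have := ht1 (ht2.mem_toFinset.1 ha)
      simpa using this) f hf (min δ η) (lt_min hδ hη) (η/2) (by positivity)
  obtain ⟨y0, hy0, hy1⟩ := ContinuousLinearMap.exists_lt_apply_of_lt_opNorm f₁
    (show 1 - δ₁ < ‖f₁‖ by linarith)
  obtain ⟨y, hy, hyf⟩ : ∃ y : Y, ‖y‖ ≤ 1 ∧ 1 - δ₁ < f₁ y := by
    rcases le_total 0 (f₁ y0) with h0 | h0
    · exact ⟨y0, hy0.le, by rwa [Real.norm_of_nonneg h0] at hy1⟩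
    · exact ⟨-y0, by simpa using hy0.le, by rw [Real.norm_of_nonpos h0] at hy1; simpa using hy1⟩
  obtain ⟨h4, h5⟩ := h3 y hy hyf
  have m1 := min_le_left δ η
  have m2 := min_le_right δ η
  refine ⟨y, hy, by linarith, ?_⟩
  have A : ∀ e ∈ S, ‖e‖ = 1 → 2 - η ≤ ‖e + y‖ := by
    intro e he hen
    have : (⟨e, he⟩ : S) ∈ Metric.sphere (0 : S) 1 := by simpa using hen
    obtain ⟨⟨x, hxS⟩, hxt, hd⟩ := Set.mem_iUnion₂.1 (ht3 this)
    rw [Metric.mem_ball] at hd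
    have h6 := h5 x (Finset.mem_image.2 ⟨⟨x, hxS⟩, ht2.mem_toFinset.2 hxt, rfl⟩)
    have h7 : ‖e - x‖ < η/2 := by
      rw [Subtype.dist_eq, dist_eq_norm] at hd; exact hd
    have h8 : ‖x + y‖ ≤ ‖e + y‖ + ‖e - x‖ := by
      have := norm_sub_le (e + y) (e - x)
      have e2 : e + y - (e - x) = x + y := by abel
      rwa [e2] at this
    linarith
  have A' : ∀ e ∈ S, ‖e‖ = 1 → ∀ t : ℝ, 0 ≤ t → (1 - η) * (1 + t) ≤ ‖e + t • y‖ := by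
    intro e he hen t ht
    have h6 := A e he hen
    rcases le_total t 1 with h1 | h1
    · have : ‖e + y‖ ≤ ‖e + t • y‖ + (1 - t) * ‖y‖ := by
        have := norm_add_le (e + t • y) ((1 - t) • y)
        rw [norm_smul, Real.norm_of_nonneg (by linarith)] at this
        have e2 : e + t • y + (1 - t) • y = e + y := by rw [sub_smul]; simp
        rwa [e2] at this
      nlinarith [norm_nonneg y]
    · have : t * ‖e + y‖ ≤ ‖e + t • y‖ + (t - 1) * ‖e‖ := by
        have := norm_add_le (e + t • y) ((t - 1) • e)
        rw [norm_smul, Real.norm_of_nonneg (by linarith)] at this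
        have e2 : e + t • y + (t - 1) • e = t • (e + y) := by module
        rwa [e2, norm_smul, Real.norm_of_nonneg ht] at this
      nlinarith
  have A2 : ∀ e ∈ S, ‖e‖ = 1 → ∀ t : ℝ, (1 - η) * (1 + |t|) ≤ ‖e + t • y‖ := by
    intro e he hen t
    rcases le_total 0 t with h0 | h0
    · rw [abs_of_nonneg h0]; exact A' e he hen t h0
    · rw [abs_of_nonpos h0]
      have := A' (-e) (S.neg_mem he) (by simpa using hen) (-t) (by linarith)
      rwa [neg_smul, ← neg_add, norm_neg] at this
  have hyn : ∀ (t : ℝ), (1 - η) * |t| ≤ ‖t • y‖ := by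
    intro t
    rw [norm_smul, Real.norm_eq_abs, mul_comm]
    apply mul_le_mul_of_nonneg_left _ (abs_nonneg t)
    have h6 := f.le_opNorm y
    have h7 := le_abs_self (f y)
    rw [Real.norm_eq_abs, hf] at h6
    linarith
  intro e he t
  by_cases he0 : e = 0
  · subst he0
    have := hyn t
    simp only [norm_zero, zero_add]
    nlinarith [abs_nonneg t]
  · have hpos : 0 < ‖e‖ := norm_pos_iff.2 he0
    have := A2 (‖e‖⁻¹ • e) (S.smul_mem _ he) (by
      rw [norm_smul, norm_inv, norm_norm, inv_mul_cancel₀ hpos.ne']) (‖e‖⁻¹ * t)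
    have e3 : ‖e‖⁻¹ • e + (‖e‖⁻¹ * t) • y = ‖e‖⁻¹ • (e + t • y) := by module
    rw [e3, norm_smul, norm_inv, norm_norm, abs_mul, abs_inv, abs_norm] at this
    have h9 := mul_le_mul_of_nonneg_left this hpos.le
    have e4 : ‖e‖ * ((1 - η) * (1 + ‖e‖⁻¹ * |t|)) = (1 - η) * (‖e‖ + |t|) := by
      field_simp
    have e5 : ‖e‖ * (‖e‖⁻¹ * ‖e + t • y‖) = ‖e + t • y‖ := by
      field_simp
    rw [e4, e5] at h9
    refine le_trans ?_ h9
    apply mul_le_mul_of_nonneg_right <;> [linarith; positivity]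

end aux

section aux2
variable {Y : Type*} [NormedAddCommGroup Y] [NormedSpace ℝ Y]

lemma dg_nontrivial (h : DaugavetProperty Y) : ∃ x : Y, x ≠ 0 := by
  by_contra hc
  push Not at hc
  have : Subsingleton Y := ⟨fun a b => by rw [hc a, hc b]⟩
  have h1 := h 0 0
  have h2 : ContinuousLinearMap.id ℝ Y = 0 := by ext x; exact hc _
  rw [h2] at h1
  simp at h1

lemma dg_PL2 (h : DaugavetProperty Y) (E : Finset Y) (c : ℝ) (hc1 : c < 1)
    (f : Y →L[ℝ] ℝ) (δ : ℝ) (hδ : 0 < δ) :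
    ∃ y : Y, ‖y‖ ≤ 1 ∧ ‖f‖ - δ < f y ∧ PL E c y := by
  by_cases hf : f = 0
  · subst hf
    obtain ⟨x, hx⟩ := dg_nontrivial h
    obtain ⟨g, hg, -⟩ := exists_dual_vector ℝ x (norm_ne_zero_iff.2 hx)
    obtain ⟨y, h1, -, h3⟩ := dg_PL1 h E c hc1 g hg 1 one_pos
    exact ⟨y, h1, by simpa using hδ, h3⟩
  · have hpos : 0 < ‖f‖ := norm_pos_iff.2 hf
    obtain ⟨y, h1, h2, h3⟩ := dg_PL1 h E c hc1 (‖f‖⁻¹ • f) (by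
      rw [norm_smul, norm_inv, norm_norm, inv_mul_cancel₀ hpos.ne']) (δ / ‖f‖) (by positivity)
    refine ⟨y, h1, ?_, h3⟩
    have h4 := mul_lt_mul_of_pos_left h2 hpos
    have e1 : ‖f‖ * (1 - δ / ‖f‖) = ‖f‖ - δ := by field_simp
    have e2 : ‖f‖ * (‖f‖⁻¹ • f) y = f y := by
      simp [hpos.ne']
    rwa [e1, e2] at h4

lemma PL.comb {E : Finset Y} {c : ℝ} (hc0 : 0 ≤ c) (hc1 : c ≤ 1) {y₁ y₂ : Y} [DecidableEq Y]
    (h1 : PL E c y₁) (h2 : PL (insert y₁ E) c y₂) {a b : ℝ} (ha : 0 ≤ a) (hb : 0 ≤ b)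
    (hab : a + b = 1) : PL E (c * c) (a • y₁ + b • y₂) := by
  intro e he t
  have hmem : e + (t * a) • y₁ ∈ Submodule.span ℝ ((insert y₁ E : Finset Y) : Set Y) := by
    refine Submodule.add_mem _ (Submodule.span_mono ?_ he) (Submodule.smul_mem _ _ ?_)
    · simp
    · exact Submodule.subset_span (by simp)
  have k1 := h1 e he (t * a)
  have k2 := h2 _ hmem (t * b)
  have e1 : e + (t * a) • y₁ + (t * b) • y₂ = e + t • (a • y₁ + b • y₂) := by module
  rw [e1, abs_mul, abs_of_nonneg hb] at k2
  rw [abs_mul, abs_of_nonneg ha] at k1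
  refine le_trans ?_ k2
  have k3 := mul_le_mul_of_nonneg_left k1 hc0
  have hb' : b = 1 - a := by linarith
  have k4 : c * c * (|t| * b) ≤ c * (|t| * b) := by
    apply mul_le_mul_of_nonneg_right _ (by positivity)
    nlinarith
  subst hb'
  nlinarith

lemma dg_weak (h : DaugavetProperty Y) {V : Type*} [NormedAddCommGroup V] [NormedSpace ℝ V]
    [FiniteDimensional ℝ V] (G : Y →L[ℝ] V) (x : Y) (hx : ‖x‖ ≤ 1) (E : Finset Y) (c : ℝ)
    (hc0 : 0 < c) (hc1 : c < 1) (ε : ℝ) (hε : 0 < ε) :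
    ∃ y : Y, ‖y‖ ≤ 1 ∧ PL E c y ∧ ‖G y - G x‖ < ε := by
  classical
  let I := Finset Y × Set.Ioo (0:ℝ) 1
  let T : I → Set V := fun i => closure (G '' {y | ‖y‖ ≤ 1 ∧ PL i.1 i.2 y})
  have Tmono : ∀ i j : I, i.1 ⊆ j.1 → (i.2 : ℝ) ≤ j.2 → T j ⊆ T i := by
    intro i j h1 h2
    apply closure_mono
    apply Set.image_mono
    rintro y ⟨hy, hp⟩
    exact ⟨hy, hp.mono h1 h2⟩
  let A : Set V := ⋂ i, T i
  have Acl : IsClosed A := isClosed_iInter fun i => isClosed_closure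
  have Acv : Convex ℝ A := by
    intro a1 ha1 a2 ha2 l m hl hm hlm
    refine Set.mem_iInter.2 fun i => Metric.mem_closure_iff.2 fun η hη => ?_
    obtain ⟨E, c, hc0, hc1⟩ := i
    let c1 : Set.Ioo (0:ℝ) 1 := ⟨(1 + c)/2, by constructor <;> linarith⟩
    have hc1v : (c1 : ℝ) = (1 + c)/2 := rfl
    obtain ⟨_, ⟨y1, ⟨hy1, hp1⟩, rfl⟩, hd1⟩ :=
      Metric.mem_closure_iff.1 (Set.mem_iInter.1 ha1 (E, c1)) η hη
    obtain ⟨_, ⟨y2, ⟨hy2, hp2⟩, rfl⟩, hd2⟩ :=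
      Metric.mem_closure_iff.1 (Set.mem_iInter.1 ha2 (insert y1 E, c1)) η hη
    refine ⟨G (l • y1 + m • y2), ⟨_, ⟨?_, ?_⟩, rfl⟩, ?_⟩
    · have := (convex_closedBall (0 : Y) 1) (x := y1) (by simpa using hy1) (y := y2)
        (by simpa using hy2) hl hm hlm
      simpa using this
    · refine PL.mono (PL.comb (c := c1) ?_ ?_ hp1 hp2 hl hm hlm) (Finset.Subset.refl _) ?_
      · rw [hc1v]; linarith
      · rw [hc1v]; linarith
      · rw [hc1v]; nlinarith [sq_nonneg (1 - c)]
    · rw [dist_eq_norm] at hd1 hd2 ⊢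
      rw [map_add, map_smul, map_smul]
      have e1 : l • a1 + m • a2 - (l • G y1 + m • G y2) = l • (a1 - G y1) + m • (a2 - G y2) := by
        module
      rw [e1]
      have := (convex_ball (0 : V) η) (x := a1 - G y1) (by simpa using hd1) (y := a2 - G y2)
        (by simpa using hd2) hl hm hlm
      simpa using this
  have hmem : G x ∈ A := by
    by_contra hnot
    obtain ⟨ψ, s, h1, h2⟩ := geometric_hahn_banach_closed_point Acv Acl hnot
    let f : Y →L[ℝ] ℝ := ψ.comp G
    have hfx : f x ≤ ‖f‖ := by
      have h3 := f.le_opNorm x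
      have h4 := le_abs_self (f x)
      rw [Real.norm_eq_abs] at h3
      nlinarith [norm_nonneg f]
    have hs : s < ‖f‖ := lt_of_lt_of_le h2 hfx
    have Bcomp : IsCompact (Metric.closedBall (0 : V) ‖G‖) := by
      have : ProperSpace V := FiniteDimensional.proper ℝ V
      exact isCompact_closedBall _ _
    have Hcl : IsClosed {v : V | s ≤ ψ v} := isClosed_le continuous_const ψ.continuous
    have : Nonempty I := ⟨(∅, ⟨1/2, by norm_num, by norm_num⟩)⟩
    have : (⋂ i, (T i ∩ {v : V | s ≤ ψ v})).Nonempty := by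
      apply IsCompact.nonempty_iInter_of_directed_nonempty_isCompact_isClosed
      · intro i j
        refine ⟨(i.1 ∪ j.1, max i.2 j.2), ?_, ?_⟩
        · exact Set.inter_subset_inter_left _ (Tmono _ _ Finset.subset_union_left (le_max_left i.2 j.2))
        · exact Set.inter_subset_inter_left _ (Tmono _ _ Finset.subset_union_right (le_max_right i.2 j.2))
      · intro i
        obtain ⟨y, hy1, hy2, hy3⟩ := dg_PL2 h i.1 i.2 i.2.2.2 f (‖f‖ - s) (by linarith)
        refine ⟨G y, subset_closure ⟨y, ⟨hy1, hy3⟩, rfl⟩, ?_⟩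
        have : s < f y := by linarith
        exact this.le
      · intro i
        refine Bcomp.of_isClosed_subset (isClosed_closure.inter Hcl) ?_
        refine Set.inter_subset_left.trans (closure_minimal ?_ Metric.isClosed_closedBall)
        rintro _ ⟨y, ⟨hy, -⟩, rfl⟩
        have := G.le_opNorm y
        rw [mem_closedBall_zero_iff]
        nlinarith [norm_nonneg G]
      · intro i
        exact isClosed_closure.inter Hcl
    obtain ⟨a, ha⟩ := this
    have ha1 : a ∈ A := Set.mem_iInter.2 fun i => (Set.mem_iInter.1 ha i).1
    have ha2 : s ≤ ψ a := (Set.mem_iInter.1 ha (Classical.arbitrary I)).2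
    exact absurd (h1 a ha1) (not_lt.2 ha2)
  obtain ⟨_, ⟨y, ⟨hy, hp⟩, rfl⟩, hd⟩ :=
    Metric.mem_closure_iff.1 (Set.mem_iInter.1 hmem (E, ⟨c, hc0, hc1⟩)) ε hε
  refine ⟨y, hy, hp, ?_⟩
  rwa [dist_comm, dist_eq_norm] at hd

lemma dg_core (h : DaugavetProperty Y) (Φ : Finset (Y →L[ℝ] ℝ)) (E : Finset Y) (c : ℝ)
    (hc0 : 0 < c) (hc1 : c < 1) (x : Y) (hx : ‖x‖ ≤ 1) (hxΦ : ∀ φ ∈ Φ, φ x = 0)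
    (f : Y →L[ℝ] ℝ) (ε : ℝ) (hε : 0 < ε) :
    ∃ y : Y, ‖y‖ ≤ 1 ∧ (∀ φ ∈ Φ, φ y = 0) ∧ f x - ε < f y ∧ y ≠ 0 ∧
      ∀ e ∈ Submodule.span ℝ (E : Set Y), ∀ t : ℝ, c * ‖e‖ ≤ ‖e + t • y‖ := by
  let G₀ : Y →L[ℝ] (Φ → ℝ) := ContinuousLinearMap.pi (fun φ => (φ : Y →L[ℝ] ℝ))
  have hG₀x : G₀ x = 0 := by
    ext φ; exact hxΦ φ φ.2
  obtain ⟨R, hR⟩ := LinearMap.exists_rightInverse_of_surjective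
    (G₀ : Y →ₗ[ℝ] (Φ → ℝ)).rangeRestrict (LinearMap.range_rangeRestrict _)
  let R' : LinearMap.range (G₀ : Y →ₗ[ℝ] (Φ → ℝ)) →L[ℝ] Y := LinearMap.toContinuousLinearMap R
  obtain ⟨κ, hκ, hκ1, hκε⟩ : ∃ κ : ℝ, 0 < κ ∧ κ ≤ c/2 ∧ κ * (1 + 2 * ‖f‖) < ε := by
    refine ⟨min (c/2) (ε / (2 * (1 + 2 * ‖f‖))), by positivity, min_le_left _ _, ?_⟩
    have h1 := min_le_right (c/2) (ε / (2 * (1 + 2 * ‖f‖)))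
    have h2 : 0 < 1 + 2 * ‖f‖ := by positivity
    calc _ ≤ (ε / (2 * (1 + 2 * ‖f‖))) * (1 + 2 * ‖f‖) := by gcongr
      _ = ε / 2 := by field_simp
      _ < ε := by linarith
  obtain ⟨η, hη, hηκ, hηR⟩ : ∃ η : ℝ, 0 < η ∧ η ≤ κ ∧ ‖R'‖ * η ≤ κ := by
    refine ⟨min κ (κ / (1 + ‖R'‖)), by positivity, min_le_left _ _, ?_⟩
    have h1 := min_le_right κ (κ / (1 + ‖R'‖))
    calc _ ≤ ‖R'‖ * (κ / (1 + ‖R'‖)) := by gcongr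
      _ = κ * (‖R'‖ / (1 + ‖R'‖)) := by ring
      _ ≤ κ * 1 := by
        gcongr
        rw [div_le_one (by positivity)]; linarith
      _ = κ := mul_one _
  obtain ⟨y₀, hy₀, hp, hd⟩ := dg_weak h (f.prod G₀) x hx E c hc0 hc1 η hη
  have hd1 : |f y₀ - f x| < η := by
    have := norm_fst_le ((f.prod G₀) y₀ - (f.prod G₀) x)
    exact lt_of_le_of_lt this hd
  have hd2 : ‖G₀ y₀‖ < η := by
    have := norm_snd_le ((f.prod G₀) y₀ - (f.prod G₀) x)
    have h2 : ((f.prod G₀) y₀ - (f.prod G₀) x).2 = G₀ y₀ := by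
      change G₀ y₀ - G₀ x = _
      rw [hG₀x, sub_zero]
    rw [h2] at this
    exact lt_of_le_of_lt this hd
  let v : LinearMap.range (G₀ : Y →ₗ[ℝ] (Φ → ℝ)) := ⟨G₀ y₀, ⟨y₀, rfl⟩⟩
  let z : Y := R' v
  have hz : ‖z‖ ≤ κ := by
    have h1 := R'.le_opNorm v
    have h2 : ‖v‖ = ‖G₀ y₀‖ := rfl
    rw [h2] at h1
    refine h1.trans (le_trans ?_ hηR)
    gcongr
  have hGz : G₀ z = G₀ y₀ := by
    have := LinearMap.congr_fun hR v
    have := congrArg Subtype.val this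
    exact this
  let s : ℝ := (1 + κ)⁻¹
  have hs0 : 0 < s := by positivity
  have hs1 : s ≤ 1 := inv_le_one_of_one_le₀ (by linarith)
  have hsκ : s * (1 + κ) = 1 := inv_mul_cancel₀ (by positivity)
  have hP : ∀ e ∈ Submodule.span ℝ (E : Set Y), ∀ t : ℝ,
      c * ‖e‖ + |t| * (s * (c - κ)) ≤ ‖e + t • (s • (y₀ - z))‖ := by
    intro e he t
    have h1 := hp e he (t * s)
    rw [abs_mul, abs_of_pos hs0] at h1
    have h2 := norm_add_le (e + t • (s • (y₀ - z))) ((t * s) • z)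
    have e1 : e + t • (s • (y₀ - z)) + (t * s) • z = e + (t * s) • y₀ := by module
    rw [e1, norm_smul, Real.norm_eq_abs, abs_mul, abs_of_pos hs0] at h2
    have h3 : |t| * s * ‖z‖ ≤ |t| * s * κ := by gcongr
    nlinarith
  refine ⟨s • (y₀ - z), ?_, ?_, ?_, ?_, ?_⟩
  · rw [norm_smul, Real.norm_of_nonneg hs0.le, ← hsκ]
    gcongr
    exact (norm_sub_le _ _).trans (add_le_add hy₀ hz)
  · intro φ hφ
    have := congrFun hGz ⟨φ, hφ⟩
    have h2 : φ z = φ y₀ := this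
    simp [h2]
  · have hfz : |f z| ≤ ‖f‖ * κ := by
      have := f.le_opNorm z
      rw [Real.norm_eq_abs] at this
      exact this.trans (by gcongr)
    have hfx : |f x| ≤ ‖f‖ := by
      have := f.le_opNorm x
      rw [Real.norm_eq_abs] at this
      nlinarith [norm_nonneg f]
    have e1 : f (s • (y₀ - z)) = s * (f y₀ - f z) := by simp
    rw [e1]
    have a1 := abs_lt.1 hd1
    have a2 := abs_le.1 hfz
    have a3 := abs_le.1 hfx
    have h1s : 1 - s ≤ κ := by nlinarith
    have b1 : -(η + ‖f‖ * κ) ≤ s * (f y₀ - f z - f x) := by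
      have : -(η + ‖f‖ * κ) ≤ f y₀ - f z - f x := by linarith
      have hh : 0 ≤ η + ‖f‖ * κ := by positivity
      nlinarith
    have b2 : (1 - s) * f x ≤ κ * ‖f‖ := by
      have : (1 - s) * f x ≤ (1 - s) * ‖f‖ := by
        apply mul_le_mul_of_nonneg_left a3.2; linarith
      nlinarith [norm_nonneg f]
    nlinarith
  · intro h0
    have := hP 0 (Submodule.zero_mem _) 1
    rw [h0] at this
    simp only [norm_zero, abs_one, mul_zero, zero_add, one_mul, smul_zero] at this
    have h3 : 0 < s * (c - κ) := by
      have : 0 < c - κ := by linarith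
      positivity
    linarith
  · intro e he t
    refine le_trans ?_ (hP e he t)
    have : 0 ≤ |t| * (s * (c - κ)) := by
      have : 0 < c - κ := by linarith
      positivity
    linarith

end aux2

section aux3
variable {Y : Type*} [NormedAddCommGroup Y] [NormedSpace ℝ Y]

def PB (E : Finset Y) (c : ℝ) (y : Y) : Prop :=
  ∀ e ∈ Submodule.span ℝ (E : Set Y), ∀ t : ℝ, c * ‖e‖ ≤ ‖e + t • y‖

lemma dg_one (h : DaugavetProperty Y) (Φ : Finset (Y →L[ℝ] ℝ)) (E : Finset Y) (c : ℝ)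
    (hc0 : 0 < c) (hc1 : c < 1) (x : Y) (hx : ‖x‖ ≤ 1) (hxΦ : ∀ φ ∈ Φ, φ x = 0)
    (ε : ℝ) (hε : 0 < ε) :
    ∃ D : Finset Y, (∀ y ∈ D, ‖y‖ ≤ 1 ∧ (∀ φ ∈ Φ, φ y = 0) ∧ PB E c y) ∧
      ∀ f : Y →L[ℝ] ℝ, ∃ y ∈ D, f x - ε * ‖f‖ ≤ f y := by
  let T : Set Y := {y | ‖y‖ ≤ 1 ∧ (∀ φ ∈ Φ, φ y = 0) ∧ PB E c y}
  have hmem : x ∈ closure (convexHull ℝ T) := by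
    by_contra hnot
    obtain ⟨f, s, h1, h2⟩ := geometric_hahn_banach_closed_point
      (convex_convexHull ℝ T).closure isClosed_closure hnot
    obtain ⟨y, hy1, hy2, hy3, -, hy5⟩ := dg_core h Φ E c hc0 hc1 x hx hxΦ f (f x - s) (by linarith)
    have := h1 y (subset_closure (subset_convexHull ℝ T ⟨hy1, hy2, hy5⟩))
    linarith
  obtain ⟨p, hp, hd⟩ := Metric.mem_closure_iff.1 hmem ε hε
  rw [convexHull_eq_union_convexHull_finite_subsets] at hp
  obtain ⟨D, hDT, hpD⟩ := Set.mem_iUnion₂.1 hp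
  refine ⟨D, fun y hy => hDT hy, fun f => ?_⟩
  by_contra hcon
  push Not at hcon
  have hlt : f p < f x - ε * ‖f‖ := by
    have hc : Convex ℝ {z : Y | f z < f x - ε * ‖f‖} :=
      convex_halfSpace_lt f.isBoundedLinearMap.toIsLinearMap _
    exact convexHull_min (fun y hy => hcon y hy) hc hpD
  have h3 := f.le_opNorm (x - p)
  rw [Real.norm_eq_abs, map_sub] at h3
  have h4 := le_abs_self (f x - f p)
  rw [dist_eq_norm] at hd
  nlinarith [norm_nonneg f]

lemma dg_fin (h : DaugavetProperty Y) (Φ : Finset (Y →L[ℝ] ℝ)) (F : Finset Y) (c : ℝ)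
    (hc0 : 0 < c) (hc1 : c < 1) (hF : ∀ x ∈ F, ‖x‖ ≤ 1 ∧ ∀ φ ∈ Φ, φ x = 0)
    (ε : ℝ) (hε : 0 < ε) :
    ∃ D : Finset Y, (∀ y ∈ D, ‖y‖ ≤ 1 ∧ (∀ φ ∈ Φ, φ y = 0) ∧ PB F c y) ∧
      ∀ x ∈ F, ∀ f : Y →L[ℝ] ℝ, ∃ y ∈ D, f x - ε * ‖f‖ ≤ f y := by
  classical
  have : ∀ x : F, ∃ D : Finset Y, (∀ y ∈ D, ‖y‖ ≤ 1 ∧ (∀ φ ∈ Φ, φ y = 0) ∧ PB F c y) ∧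
      ∀ f : Y →L[ℝ] ℝ, ∃ y ∈ D, f x - ε * ‖f‖ ≤ f y := fun x =>
    dg_one h Φ F c hc0 hc1 x (hF x x.2).1 (hF x x.2).2 ε hε
  choose D hD1 hD2 using this
  refine ⟨Finset.univ.biUnion D, ?_, ?_⟩
  · intro y hy
    obtain ⟨x, -, hx⟩ := Finset.mem_biUnion.1 hy
    exact hD1 x y hx
  · intro x hx f
    obtain ⟨y, hy, hy2⟩ := hD2 ⟨x, hx⟩ f
    exact ⟨y, Finset.mem_biUnion.2 ⟨⟨x, hx⟩, Finset.mem_univ _, hy⟩, hy2⟩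

lemma exists_fun_kill (E : Finset Y) (u : Y) (hu : u ∉ Submodule.span ℝ (E : Set Y)) :
    ∃ φ : Y →L[ℝ] ℝ, φ u = 1 ∧ ∀ e ∈ E, φ e = 0 := by
  have : FiniteDimensional ℝ (Submodule.span ℝ (E : Set Y)) := FiniteDimensional.span_finset ℝ E
  have hcl : IsClosed ((Submodule.span ℝ (E : Set Y)) : Set Y) :=
    Submodule.closed_of_finiteDimensional _
  obtain ⟨f, s, h1, h2⟩ := geometric_hahn_banach_closed_point
      (Submodule.convex (Submodule.span ℝ (E : Set Y))) hcl hu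
  have hz : ∀ e ∈ Submodule.span ℝ (E : Set Y), f e = 0 := by
    intro e he
    by_contra hne
    have := h1 (((s + 1) / f e) • e) (Submodule.smul_mem _ _ he)
    rw [map_smul, smul_eq_mul, div_mul_cancel₀ _ hne] at this
    linarith
  have hs : 0 < s := by simpa using h1 0 (Submodule.zero_mem _)
  have hfu : f u ≠ 0 := by linarith
  refine ⟨(f u)⁻¹ • f, by simp [hfu], fun e he => ?_⟩
  simp [hz e (Submodule.subset_span he)]

structure St (Y : Type*) [NormedAddCommGroup Y] [NormedSpace ℝ Y] where
  F : Finset Y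
  U : Finset Y
  P : Finset (Y →L[ℝ] ℝ)
  p : Y →L[ℝ] ℝ
  u : Y

def St.Inv (s : St Y) : Prop := ∀ x ∈ s.F, ‖x‖ ≤ 1 ∧ ∀ φ ∈ s.P, φ x = 0

noncomputable def cs (n : ℕ) : ℝ := 1/2 + 1/((n:ℝ)+2)

lemma cs_pos (n : ℕ) : 1/2 < cs n := by
  unfold cs
  have : 0 < 1/((n:ℝ)+2) := by positivity
  linarith

lemma cs_anti {n m : ℕ} (h : n ≤ m) : cs m ≤ cs n := by
  unfold cs
  have : (n:ℝ) ≤ m := by exact_mod_cast h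
  gcongr

lemma cs_lt (n : ℕ) : cs (n+1) < cs n := by
  unfold cs
  push_cast
  have : 1/((n:ℝ)+1+2) < 1/((n:ℝ)+2) := by
    apply one_div_lt_one_div_of_lt <;> [positivity; linarith]
  linarith

structure St.Step (n : ℕ) (s s' : St Y) : Prop where
  hF : s.F ⊆ s'.F
  hU : s.U ⊆ s'.U
  hP : s.P ⊆ s'.P
  hp : s'.p ∈ s'.P
  hu : s'.u ∈ s'.U
  hpu : s'.p s'.u = 1
  hpU : ∀ v ∈ s.U, s'.p v = 0
  hPu : ∀ φ ∈ s.P, φ s'.u = 0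
  hb : ∀ x ∈ s.F, ∀ f : Y →L[ℝ] ℝ, ∃ y ∈ s'.F, f x - 1/((n:ℝ)+1) * ‖f‖ ≤ f y ∧
    PB s.F (cs (n+1) / cs n) y

lemma St.exists_step (h : DaugavetProperty Y) (n : ℕ) (s : St Y) (hs : s.Inv) :
    ∃ s' : St Y, s'.Inv ∧ s.Step n s' := by
  classical
  have hn := cs_pos n
  have hn1 := cs_pos (n+1)
  obtain ⟨D, hD1, hD2⟩ := dg_fin h s.P s.F (cs (n+1) / cs n) (by
    apply div_pos <;> linarith) ((div_lt_one (by linarith)).2 (cs_lt n)) hs (1/((n:ℝ)+1))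
    (by positivity)
  obtain ⟨u, hu1, hu2, -, hu4, hu5⟩ := dg_core h s.P (s.F ∪ D ∪ s.U) (1/2) (by norm_num)
    (by norm_num) 0 (by simp) (by simp) 0 1 one_pos
  have hu : u ∉ Submodule.span ℝ ((s.F ∪ D ∪ s.U : Finset Y) : Set Y) := by
    intro hmem
    have := hu5 u hmem (-1)
    simp only [neg_smul, one_smul, add_neg_cancel, norm_zero] at this
    have h0 : 0 < ‖u‖ := norm_pos_iff.2 hu4
    linarith
  obtain ⟨φ, hφ1, hφ2⟩ := exists_fun_kill _ u hu
  refine ⟨⟨s.F ∪ D, insert u s.U, insert φ s.P, φ, u⟩, ?_, ?_⟩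
  · intro x hx
    have hx' : ‖x‖ ≤ 1 ∧ ∀ φ ∈ s.P, φ x = 0 := by
      rcases Finset.mem_union.1 hx with h1 | h1
      · exact hs x h1
      · exact ⟨(hD1 x h1).1, (hD1 x h1).2.1⟩
    refine ⟨hx'.1, fun ψ hψ => ?_⟩
    rcases Finset.mem_insert.1 hψ with rfl | h1
    · exact hφ2 x (Finset.mem_union_left _ hx)
    · exact hx'.2 ψ h1
  · constructor
    · exact Finset.subset_union_left
    · exact Finset.subset_insert _ _
    · exact Finset.subset_insert _ _
    · exact Finset.mem_insert_self _ _
    · exact Finset.mem_insert_self _ _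
    · exact hφ1
    · exact fun v hv => hφ2 v (Finset.mem_union_right _ hv)
    · exact hu2
    · intro x hx f
      obtain ⟨y, hy, hy2⟩ := hD2 x hx f
      exact ⟨y, Finset.mem_union_right _ hy, hy2, (hD1 y hy).2.2⟩

lemma dg_construct (h : DaugavetProperty Y) :
    ∃ (x₀ : Y) (F : ℕ → Finset Y) (φ : ℕ → Y →L[ℝ] ℝ) (u : ℕ → Y),
      x₀ ≠ 0 ∧ x₀ ∈ F 0 ∧ Monotone F ∧ (∀ n, ∀ x ∈ F n, ‖x‖ ≤ 1) ∧
      (∀ j n, ∀ x ∈ F n, φ j x = 0) ∧ (∀ j, φ j (u j) = 1) ∧ (∀ i j, i ≠ j → φ i (u j) = 0) ∧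
      (∀ n, ∀ x ∈ F n, ∀ f : Y →L[ℝ] ℝ, ∃ y ∈ F (n+1), f x - 1/((n:ℝ)+1) * ‖f‖ ≤ f y ∧
        PB (F n) (cs (n+1) / cs n) y) := by
  classical
  obtain ⟨x, hx⟩ := dg_nontrivial h
  choose nx hnx1 hnx2 using St.exists_step h
  let s0 : St Y := ⟨{‖x‖⁻¹ • x}, ∅, ∅, 0, 0⟩
  have hs0 : s0.Inv := by
    intro y hy
    have : y = ‖x‖⁻¹ • x := by simpa [s0] using hy
    subst this
    refine ⟨?_, by simp [s0]⟩
    rw [norm_smul, norm_inv, norm_norm, inv_mul_cancel₀ (norm_ne_zero_iff.2 hx)]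
  let S : ℕ → {s : St Y // s.Inv} := fun n => Nat.rec ⟨s0, hs0⟩
    (fun n s => ⟨nx n s.1 s.2, hnx1 n s.1 s.2⟩) n
  have hS : ∀ n, St.Step n (S n).1 (S (n+1)).1 := fun n => hnx2 n (S n).1 (S n).2
  have mF : Monotone (fun n => (S n).1.F) := monotone_nat_of_le_succ fun n => (hS n).hF
  have mU : Monotone (fun n => (S n).1.U) := monotone_nat_of_le_succ fun n => (hS n).hU
  have mP : Monotone (fun n => (S n).1.P) := monotone_nat_of_le_succ fun n => (hS n).hP
  refine ⟨‖x‖⁻¹ • x, fun n => (S n).1.F, fun n => (S (n+1)).1.p, fun n => (S (n+1)).1.u,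
    ?_, ?_, mF, ?_, ?_, ?_, ?_, ?_⟩
  · simp [hx]
  · change _ ∈ ({‖x‖⁻¹ • x} : Finset Y)
    simp
  · exact fun n y hy => ((S n).2 y hy).1
  · intro j n y hy
    exact ((S (max n (j+1))).2 y (mF (le_max_left _ _) hy)).2 _ (mP (le_max_right _ _) (hS j).hp)
  · exact fun j => (hS j).hpu
  · intro i j hij
    rcases lt_or_gt_of_ne hij with h1 | h1
    · exact (hS j).hPu _ (mP (Nat.succ_le_of_lt h1) (hS i).hp)
    · exact (hS i).hpU _ (mU (Nat.succ_le_of_lt h1) (hS j).hu)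
  · exact fun n => (hS n).hb

end aux3

section aux4
variable {Y : Type*} [NormedAddCommGroup Y] [NormedSpace ℝ Y]

def AH (w : ℕ → Y) : Set Y := closure (convexHull ℝ {z | ∃ j, z = w j ∨ z = - w j})

lemma AH_convex (w : ℕ → Y) : Convex ℝ (AH w) := (convex_convexHull ℝ _).closure
lemma AH_closed (w : ℕ → Y) : IsClosed (AH w) := isClosed_closure
lemma AH_mem (w : ℕ → Y) (j : ℕ) : w j ∈ AH w :=
  subset_closure (subset_convexHull ℝ _ ⟨j, Or.inl rfl⟩)
lemma AH_mem_neg (w : ℕ → Y) (j : ℕ) : - w j ∈ AH w :=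
  subset_closure (subset_convexHull ℝ _ ⟨j, Or.inr rfl⟩)
lemma AH_min (w : ℕ → Y) {C : Set Y} (h1 : Convex ℝ C) (h2 : IsClosed C)
    (h : ∀ j, w j ∈ C ∧ - w j ∈ C) : AH w ⊆ C := by
  refine closure_minimal (convexHull_min ?_ h1) h2
  rintro z ⟨j, rfl | rfl⟩
  · exact (h j).1
  · exact (h j).2
lemma AH_symm (w : ℕ → Y) : AH w = - AH w := by
  have key : AH w ⊆ - AH w := by
    refine AH_min w (AH_convex w).neg (AH_closed w).neg fun j => ⟨?_, ?_⟩
    · exact Set.mem_neg.2 (AH_mem_neg w j)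
    · rw [Set.mem_neg, neg_neg]; exact AH_mem w j
  refine Set.Subset.antisymm key ?_
  intro z hz
  have := key (Set.mem_neg.1 hz)
  simpa using this
lemma AH_neg {w : ℕ → Y} {z : Y} (hz : z ∈ AH w) : -z ∈ AH w := by
  rw [AH_symm, Set.mem_neg, neg_neg]; exact hz
lemma AH_ball (w : ℕ → Y) (M : ℝ) (hM : ∀ j, ‖w j‖ ≤ M) : AH w ⊆ Metric.closedBall 0 M :=
  AH_min w (convex_closedBall _ _) Metric.isClosed_closedBall fun j =>
    ⟨by simpa using hM j, by simpa using hM j⟩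

lemma AH_expose (w : ℕ → Y) (M : ℝ) (hM : ∀ j, ‖w j‖ ≤ M) (φ : Y →L[ℝ] ℝ) (j : ℕ)
    (hj : 0 < φ (w j)) (hij : ∀ i, i ≠ j → φ (w i) = 0) (z : Y) (hz : z ∈ AH w) :
    ‖z - w j‖ ≤ 2 * M * (1 - φ z / φ (w j)) := by
  have hM0 : 0 ≤ M := (norm_nonneg _).trans (hM 0)
  have hn : ∀ i k, ‖w i - w k‖ ≤ 2 * M := fun i k =>
    (norm_sub_le _ _).trans (by linarith [hM i, hM k])
  have hn' : ∀ i k, ‖- w i - w k‖ ≤ 2 * M := fun i k =>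
    (norm_sub_le _ _).trans (by rw [norm_neg]; linarith [hM i, hM k])
  have := AH_min w (C := {z | ‖z - w j‖ ≤ 2 * M * (1 - φ z / φ (w j))}) ?_ ?_ ?_
  · exact this hz
  · intro a ha b hb s t hs ht hst
    simp only [Set.mem_ofPred_eq] at ha hb ⊢
    have e1 : s • a + t • b - w j = s • (a - w j) + t • (b - w j) := by
      have : w j = (s + t) • w j := by rw [hst, one_smul]
      nth_rewrite 1 [this]; module
    rw [e1]
    refine (norm_add_le _ _).trans ?_
    rw [norm_smul, norm_smul, Real.norm_of_nonneg hs, Real.norm_of_nonneg ht]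
    have e2 : 2 * M * (1 - φ (s • a + t • b) / φ (w j)) =
        s * (2 * M * (1 - φ a / φ (w j))) + t * (2 * M * (1 - φ b / φ (w j))) := by
      have : t = 1 - s := by linarith
      subst this
      simp only [map_add, map_smul, smul_eq_mul]
      ring
    rw [e2]
    gcongr
  · refine isClosed_le (by fun_prop) (by fun_prop)
  · intro i
    by_cases hi : i = j
    · subst hi
      constructor
      · simp [div_self hj.ne']
      · simp only [Set.mem_ofPred_eq, map_neg, neg_div, div_self hj.ne']
        have := hn' i i
        linarith
    · constructor
      · simp only [Set.mem_ofPred_eq, hij i hi]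
        simpa using hn i j
      · simp only [Set.mem_ofPred_eq, map_neg, hij i hi]
        simpa using hn' i j

lemma AH_slice (w : ℕ → Y) (M : ℝ) (hM : ∀ j, ‖w j‖ ≤ M) (φ : Y →L[ℝ] ℝ) (j : ℕ)
    (hj : 0 < φ (w j)) (hij : ∀ i, i ≠ j → φ (w i) = 0) (η : ℝ) (hη : 0 < η) :
    ∃ V : Set Y, IsSlice (AH w) V ∧ ∀ z ∈ V, ‖z - w j‖ < η := by
  have hM0 : 0 ≤ M := (norm_nonneg _).trans (hM 0)
  have hsup : sSup (φ '' AH w) = φ (w j) := by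
    apply IsGreatest.csSup_eq
    refine ⟨⟨_, AH_mem w j, rfl⟩, ?_⟩
    rintro _ ⟨z, hz, rfl⟩
    have hh := AH_min w (C := {z | φ z ≤ φ (w j)})
      (convex_halfSpace_le φ.isBoundedLinearMap.toIsLinearMap _)
      (isClosed_le φ.continuous continuous_const) (by
        intro i
        by_cases hi : i = j
        · subst hi
          exact ⟨by simp, by simp only [Set.mem_ofPred_eq, map_neg]; linarith⟩
        · simp [hij i hi, hj.le])
    exact hh hz
  let ε := φ (w j) * (η / (2 * M + 1))
  have hε : 0 < ε := by positivity
  refine ⟨sliceSet (AH w) φ ε, ⟨⟨w j, AH_mem w j, by rw [hsup]; linarith⟩, φ, ?_, ε, hε, rfl⟩, ?_⟩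
  · rintro rfl
    simp at hj
  · rintro z ⟨hz, hz2⟩
    rw [hsup] at hz2
    have h1 := AH_expose w M hM φ j hj hij z hz
    have h2 : 1 - φ z / φ (w j) < η / (2 * M + 1) := by
      rw [sub_lt_comm, lt_div_iff₀ hj]
      have : (1 - η / (2 * M + 1)) * φ (w j) = φ (w j) - ε := by simp only [ε]; ring
      linarith
    have h3 : 2 * M * (1 - φ z / φ (w j)) ≤ 2 * M * (η / (2 * M + 1)) := by gcongr
    have h4 : 2 * M * (η / (2 * M + 1)) < η := by
      rw [← mul_div_assoc, div_lt_iff₀ (by positivity)]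
      nlinarith
    linarith

lemma IsSlice.neg' {w : ℕ → Y} {V : Set Y} (hV : IsSlice (AH w) V) : IsSlice (AH w) (-V) := by
  obtain ⟨⟨v, hv⟩, f, hf, ε, hε, rfl⟩ := hV
  refine ⟨⟨-v, by simpa using hv⟩, -f, neg_ne_zero.2 hf, ε, hε, ?_⟩
  have e : (⇑(-f) '' AH w) = f '' AH w := by
    ext r
    constructor
    · rintro ⟨z, hz, rfl⟩
      exact ⟨-z, AH_neg hz, by simp⟩
    · rintro ⟨z, hz, rfl⟩
      exact ⟨-z, AH_neg hz, by simp⟩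
  ext z
  have h1 : -z ∈ AH w ↔ z ∈ AH w := ⟨fun h => by simpa using AH_neg h, fun h => AH_neg h⟩
  have h2 : f (-z) = (-f) z := by simp
  change (-z ∈ AH w ∧ sSup (f '' AH w) - ε < f (-z)) ↔
    (z ∈ AH w ∧ sSup (⇑(-f) '' AH w) - ε < (-f) z)
  rw [e, h1, h2]

lemma AH_scd (w : ℕ → Y) (M : ℝ) (hM : ∀ j, ‖w j‖ ≤ M) (φ : ℕ → Y →L[ℝ] ℝ)
    (hj : ∀ j, 0 < φ j (w j)) (hij : ∀ i j, i ≠ j → φ j (w i) = 0) : IsSCD (AH w) := by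
  have hsl : ∀ q : ℕ × ℕ, ∃ V : Set Y, IsSlice (AH w) V ∧ ∀ z ∈ V, ‖z - w q.1‖ < 1/((q.2:ℝ)+1) :=
    fun q => AH_slice w M hM (φ q.1) q.1 (hj _) (fun i hi => hij i _ hi) _ (by positivity)
  choose V hV1 hV2 using hsl
  let V' : (ℕ × ℕ) ⊕ (ℕ × ℕ) → Set Y := Sum.elim V (fun q => - V q)
  obtain ⟨g, hg⟩ := exists_surjective_nat ((ℕ × ℕ) ⊕ (ℕ × ℕ))
  refine ⟨fun n => V' (g n), ?_, ?_⟩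
  · intro n
    change IsSlice (AH w) (V' (g n))
    rcases g n with q | q
    · exact hV1 q
    · exact (hV1 q).neg'
  · intro B hB
    have hB' : ∀ q, (B ∩ V' q).Nonempty := fun q => by
      obtain ⟨n, rfl⟩ := hg q; exact hB n
    refine AH_min w (convex_convexHull ℝ B).closure isClosed_closure fun j => ⟨?_, ?_⟩
    · refine closure_mono (subset_convexHull ℝ B) (Metric.mem_closure_iff.2 fun ε hε => ?_)
      obtain ⟨k, hk⟩ := exists_nat_one_div_lt hε
      obtain ⟨b, hb, hbV⟩ := hB' (Sum.inl (j, k))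
      refine ⟨b, hb, ?_⟩
      rw [dist_comm, dist_eq_norm]
      exact (hV2 (j, k) b hbV).trans hk
    · refine closure_mono (subset_convexHull ℝ B) (Metric.mem_closure_iff.2 fun ε hε => ?_)
      obtain ⟨k, hk⟩ := exists_nat_one_div_lt hε
      obtain ⟨b, hb, hbV⟩ := hB' (Sum.inr (j, k))
      refine ⟨b, hb, ?_⟩
      have h1 := hV2 (j, k) (-b) hbV
      rw [dist_eq_norm]
      have e : - w j - b = -b - w j := by abel
      rw [e]
      exact h1.trans hk

/-- the intersection argument -/
lemma AH_inter (y v : ℕ → Y) (a : ℕ → ℝ) (hv : ∀ j, ‖a j • v j‖ ≤ 1/((j:ℝ)+1))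
    (φ : ℕ → Y →L[ℝ] ℝ) (h1 : ∀ i j, φ i (y j) = 0) (h2 : ∀ j, φ j (v j) = 1)
    (h3 : ∀ i j, i ≠ j → φ i (v j) = 0) (x : Y) (hx : x ∈ AH (fun j => y j + a j • v j))
    (hx0 : ∀ j, φ j x = 0) : x ∈ AH y := by
  have key : ∀ N : ℕ, x ∈ Metric.cthickening (1/((N:ℝ)+1)) (AH y) := by
    intro N
    let T : Y →L[ℝ] Y := ContinuousLinearMap.id ℝ Y - ∑ i ∈ Finset.range N, (φ i).smulRight (v i)
    have hT : ∀ z, T z = z - ∑ i ∈ Finset.range N, φ i z • v i := by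
      intro z
      simp [T]
    have hgen : ∀ j, T (y j + a j • v j) ∈ Metric.cthickening (1/((N:ℝ)+1)) (AH y) := by
      intro j
      have hφ : ∀ i, φ i (y j + a j • v j) = if i = j then a j else 0 := by
        intro i
        by_cases hi : i = j
        · subst hi; simp [h1, h2]
        · simp [h1, h3 i j hi, hi]
      have hTj : T (y j + a j • v j) = y j + a j • v j - if j < N then a j • v j else 0 := by
        rw [hT]
        simp only [hφ, ite_smul, zero_smul, Finset.sum_ite_eq', Finset.mem_range]
      rw [hTj]
      apply Metric.mem_cthickening_of_dist_le _ (y j) _ _ (AH_mem y j)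
      split_ifs with hjN
      · simp; positivity
      · rw [dist_eq_norm]
        simp only [sub_zero, add_sub_cancel_left]
        refine (hv j).trans ?_
        have : (N:ℝ) ≤ j := by exact_mod_cast not_lt.1 hjN
        gcongr
    have hneg : ∀ z ∈ Metric.cthickening (1/((N:ℝ)+1)) (AH y),
        -z ∈ Metric.cthickening (1/((N:ℝ)+1)) (AH y) := by
      intro z hz
      have hp : (0:ℝ) ≤ 1/((N:ℝ)+1) := by positivity
      rw [Metric.mem_cthickening_iff] at hz ⊢
      have : Metric.infEDist (-z) (AH y) = Metric.infEDist z (AH y) := by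
        conv_lhs => rw [AH_symm y]
        rw [← Set.image_neg_eq_neg]
        exact Metric.infEDist_image (IsometryEquiv.neg Y).isometry
      rw [this]; exact hz
    have hsub := AH_min (fun j => y j + a j • v j)
      (C := T ⁻¹' (Metric.cthickening (1/((N:ℝ)+1)) (AH y)))
      (((AH_convex y).cthickening _).linear_preimage (T : Y →ₗ[ℝ] Y))
      (Metric.isClosed_cthickening.preimage T.continuous)
      (fun j => ⟨hgen j, by
        rw [Set.mem_preimage, map_neg]; exact hneg _ (hgen j)⟩)
    have := hsub hx
    rw [Set.mem_preimage, hT] at this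
    simpa [hx0] using this
  have hcl := (AH_closed y).closure_eq
  rw [← hcl, Metric.closure_eq_iInter_cthickening]
  refine Set.mem_iInter₂.2 fun δ hδ => ?_
  obtain ⟨N, hN⟩ := exists_nat_one_div_lt hδ
  exact Metric.cthickening_mono hN.le _ (key N)

end aux4

section aux5
variable {Y : Type*} [NormedAddCommGroup Y] [NormedSpace ℝ Y]

lemma PB.neg {E : Finset Y} {c : ℝ} {y : Y} (h : PB E c y) : PB E c (-y) := by
  intro e he t
  have := h e he (-t)
  simpa using this

lemma not_scd (x₀ : Y) (F : ℕ → Finset Y) (hx₀ : x₀ ≠ 0) (hx₀F : x₀ ∈ F 0) (mF : Monotone F)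
    (hb : ∀ n, ∀ x ∈ F n, ∀ f : Y →L[ℝ] ℝ, ∃ y ∈ F (n+1), f x - 1/((n:ℝ)+1) * ‖f‖ ≤ f y ∧
        PB (F n) (cs (n+1) / cs n) y)
    (y : ℕ → Y) (hy1 : ∀ j, ∃ n, y j ∈ F n) (hy2 : ∀ n, ∀ x ∈ F n, ∃ j, y j = x) :
    ¬ IsSCD (AH y) := by
  rintro ⟨V, hV, hdet⟩
  have step : ∀ m N : ℕ, ∃ (n : ℕ) (b : Y), N ≤ n ∧ b ∈ V m ∧ PB (F n) (cs (n+1) / cs n) b ∧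
      (b ∈ F (n+1) ∨ -b ∈ F (n+1)) := by
    intro m N
    obtain ⟨⟨z, hz⟩, f, hf, ε, hε, hVm⟩ := hV m
    rw [hVm] at hz
    obtain ⟨hzA, hzf⟩ := hz
    set α := sSup (f '' AH y) - ε with hα
    -- a generator in the slice
    have hgen : ∃ (g : Y →L[ℝ] ℝ) (j : ℕ), (g = f ∨ g = -f) ∧ α < g (y j) := by
      by_contra hcon
      push Not at hcon
      have hsub := AH_min y (C := {z | f z ≤ α})
        (convex_halfSpace_le f.isBoundedLinearMap.toIsLinearMap _)
        (isClosed_le f.continuous continuous_const) (by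
          intro j
          have h1 := hcon f j (Or.inl rfl)
          have h2 := hcon (-f) j (Or.inr rfl)
          constructor
          · exact h1
          · simpa using h2)
      have : f z ≤ α := hsub hzA
      linarith
    obtain ⟨g, j, hg, hgj⟩ := hgen
    obtain ⟨n₁, hn₁⟩ := hy1 j
    obtain ⟨k, hk⟩ := exists_nat_one_div_lt (show 0 < (g (y j) - α) / (‖g‖ + 1) from
      div_pos (by linarith) (by positivity))
    let n := max (max N n₁) k
    have hkn : k ≤ n := le_max_right _ _
    have hn₁n : n₁ ≤ n := (le_max_right _ _).trans (le_max_left _ _)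
    have hNn : N ≤ n := (le_max_left _ _).trans (le_max_left _ _)
    obtain ⟨b, hbF, hbg, hbP⟩ := hb n (y j) (mF hn₁n hn₁) g
    have hbα : α < g b := by
      have h1 : 1/((n:ℝ)+1) ≤ 1/((k:ℝ)+1) := by
        have : (k:ℝ) ≤ n := by exact_mod_cast hkn
        gcongr
      have h2 : 1/((n:ℝ)+1) * ‖g‖ ≤ 1/((n:ℝ)+1) * (‖g‖ + 1) := by
        gcongr; linarith
      have h3 : 1/((n:ℝ)+1) * (‖g‖ + 1) < g (y j) - α := by
        rw [← lt_div_iff₀ (by positivity)]; linarith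
      linarith
    have hbA : b ∈ AH y := by
      obtain ⟨i, rfl⟩ := hy2 _ b hbF
      exact AH_mem y i
    rcases hg with rfl | rfl
    · refine ⟨n, b, hNn, ?_, hbP, Or.inl hbF⟩
      rw [hVm]; exact ⟨hbA, hbα⟩
    · refine ⟨n, -b, hNn, ?_, hbP.neg, Or.inr (by simpa using hbF)⟩
      rw [hVm]
      refine ⟨AH_neg hbA, ?_⟩
      have e : f (-b) = (-f) b := by simp
      rw [e]; exact hbα
  choose n b hn hbV hbP hbF using step
  let N : ℕ → ℕ := fun m => Nat.rec 0 (fun m k => n m k + 1) m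
  have hN : ∀ m, N (m+1) = n m (N m) + 1 := fun m => rfl
  let c : ℕ → Y := fun m => b m (N m)
  have mN : Monotone N := monotone_nat_of_le_succ fun m => by
    rw [hN]; exact (hn m (N m)).trans (Nat.le_succ _)
  have hcF : ∀ m, c m ∈ Submodule.span ℝ (F (N (m+1)) : Set Y) := by
    intro m
    rw [hN]
    rcases hbF m (N m) with h1 | h1
    · exact Submodule.subset_span h1
    · have := Submodule.neg_mem _ (Submodule.subset_span (R := ℝ) h1)
      simpa using this
  have spanF : ∀ {i j : ℕ}, i ≤ j →
      Submodule.span ℝ (F i : Set Y) ≤ Submodule.span ℝ (F j : Set Y) := fun hij =>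
    Submodule.span_mono (by exact_mod_cast mF hij)
  let S : ℕ → Submodule ℝ Y := fun M => Submodule.span ℝ (c '' Set.Iio M)
  have SF : ∀ M, S M ≤ Submodule.span ℝ (F (N M) : Set Y) := by
    intro M
    refine Submodule.span_le.2 ?_
    rintro _ ⟨m, hm, rfl⟩
    exact spanF (mN (Nat.succ_le_of_lt hm)) (hcF m)
  have hlow : ∀ M, ∀ p ∈ S M, cs (N M) * ‖x₀‖ ≤ ‖x₀ + p‖ := by
    intro M
    induction M with
    | zero =>
      intro p hp
      have hp0 : p = 0 := by simpa [S] using hp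
      subst hp0
      have : cs (N 0) = 1 := by
        change cs 0 = 1
        norm_num [cs]
      rw [this]; simp
    | succ M ih =>
      intro p hp
      have hS : S (M+1) = Submodule.span ℝ {c M} ⊔ S M := by
        have : c '' Set.Iio (M+1) = insert (c M) (c '' Set.Iio M) := by
          rw [← Set.image_insert_eq]
          congr 1
          ext k
          simp only [Set.mem_Iio, Set.mem_insert_iff]
          omega
        simp only [S]
        rw [this, Submodule.span_insert]
      rw [hS] at hp
      obtain ⟨q, hq, p', hp', rfl⟩ := Submodule.mem_sup.1 hp
      obtain ⟨t, rfl⟩ := Submodule.mem_span_singleton.1 hq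
      have h1 := ih p' hp'
      have hnM := hn M (N M)
      have hmem : x₀ + p' ∈ Submodule.span ℝ (F (n M (N M)) : Set Y) :=
        Submodule.add_mem _ (spanF (Nat.zero_le _) (Submodule.subset_span hx₀F))
          (spanF hnM (SF M hp'))
      have h2 := hbP M (N M) _ hmem t
      have e1 : x₀ + p' + t • b M (N M) = x₀ + (t • c M + p') := by
        simp only [c]; abel
      rw [e1] at h2
      refine le_trans ?_ h2
      rw [hN]
      have h3 := cs_anti hnM
      have p1 := cs_pos (n M (N M))
      have p2 := cs_pos (n M (N M) + 1)
      have h4 : cs (n M (N M)) * ‖x₀‖ ≤ ‖x₀ + p'‖ :=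
        (mul_le_mul_of_nonneg_right h3 (norm_nonneg _)).trans h1
      calc cs (n M (N M) + 1) * ‖x₀‖
          = cs (n M (N M) + 1) / cs (n M (N M)) * (cs (n M (N M)) * ‖x₀‖) := by
            field_simp
        _ ≤ _ := by
            apply mul_le_mul_of_nonneg_left h4
            apply div_nonneg <;> linarith
  have Smono : Monotone S := fun i j hij => Submodule.span_mono (Set.image_mono (Set.Iio_subset_Iio hij))
  have hconv : ∀ p ∈ convexHull ℝ (Set.range c), ∃ M, p ∈ S M := by
    intro p hp
    have hp' : p ∈ Submodule.span ℝ (Set.range c) :=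
      convexHull_min Submodule.subset_span (Submodule.convex _) hp
    have hle : Submodule.span ℝ (Set.range c) ≤ ⨆ M, S M := by
      refine Submodule.span_le.2 ?_
      rintro _ ⟨m, rfl⟩
      exact (le_iSup S (m+1)) (Submodule.subset_span ⟨m, by simp, rfl⟩)
    exact (Submodule.mem_iSup_of_directed S Smono.directed_le).1 (hle hp')
  have hx₀A : x₀ ∈ AH y := by
    obtain ⟨i, rfl⟩ := hy2 0 x₀ hx₀F
    exact AH_mem y i
  have hcl := hdet (Set.range c) (fun m => ⟨c m, ⟨m, rfl⟩, hbV m (N m)⟩) hx₀A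
  have hpos : 0 < ‖x₀‖ := norm_pos_iff.2 hx₀
  obtain ⟨p, hp, hd⟩ := Metric.mem_closure_iff.1 hcl (‖x₀‖ / 2) (by positivity)
  obtain ⟨M, hM⟩ := hconv p hp
  have h1 := hlow M (-p) (Submodule.neg_mem _ hM)
  rw [← sub_eq_add_neg] at h1
  rw [dist_eq_norm] at hd
  have := cs_pos (N M)
  nlinarith

lemma AH_sub (y v : ℕ → Y) (a : ℕ → ℝ) (hv : ∀ j, ‖a j • v j‖ ≤ 1/((j:ℝ)+1))
    (hrep : ∀ j N, ∃ i, N ≤ i ∧ y i = y j) : AH y ⊆ AH (fun j => y j + a j • v j) := by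
  have key : ∀ j, y j ∈ AH (fun j => y j + a j • v j) := by
    intro j
    rw [← (AH_closed _).closure_eq]
    refine Metric.mem_closure_iff.2 fun ε hε => ?_
    obtain ⟨N, hN⟩ := exists_nat_one_div_lt hε
    obtain ⟨i, hi, hij⟩ := hrep j N
    refine ⟨_, AH_mem (fun j => y j + a j • v j) i, ?_⟩
    rw [dist_comm, dist_eq_norm, ← hij]
    simp only [add_sub_cancel_left]
    refine ((hv i).trans ?_).trans_lt hN
    have : (N:ℝ) ≤ i := by exact_mod_cast hi
    gcongr
  exact AH_min y (AH_convex _) (AH_closed _) fun j => ⟨key j, AH_neg (key j)⟩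

end aux5

theorem exists_symmetric_scd_sets_inter_not_scd
    {Y : Type*} [NormedAddCommGroup Y] [NormedSpace ℝ Y] [CompleteSpace Y]
    (h : DaugavetProperty Y) :
    ∃ W₁ W₂ : Set Y,
      Convex ℝ W₁ ∧ IsClosed W₁ ∧ IsBounded W₁ ∧ W₁ = -W₁ ∧ IsSCD W₁ ∧
      Convex ℝ W₂ ∧ IsClosed W₂ ∧ IsBounded W₂ ∧ W₂ = -W₂ ∧ IsSCD W₂ ∧
      (W₁ ∩ W₂).Nonempty ∧ ¬ IsSCD (W₁ ∩ W₂) := by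
  obtain ⟨x₀, F, φ, u, hx₀, hx₀F, mF, hFn, hφF, hφu, hφu', hb⟩ := dg_construct h
  let D : Set Y := ⋃ n, (F n : Set Y)
  have hDc : D.Countable := Set.countable_iUnion fun n => (F n).countable_toSet
  have hDn : D.Nonempty := ⟨x₀, Set.mem_iUnion.2 ⟨0, hx₀F⟩⟩
  obtain ⟨s, hs⟩ := hDc.exists_eq_range hDn
  let y : ℕ → Y := fun j => s (Nat.unpair j).1
  have hsD : ∀ k, ∃ n, s k ∈ F n := fun k => by
    have : s k ∈ D := by rw [hs]; exact ⟨k, rfl⟩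
    simpa [D] using this
  have hy1 : ∀ j, ∃ n, y j ∈ F n := fun j => hsD _
  have hy2 : ∀ n, ∀ x ∈ F n, ∃ j, y j = x := by
    intro n x hx
    have : x ∈ D := Set.mem_iUnion.2 ⟨n, hx⟩
    rw [hs] at this
    obtain ⟨k, rfl⟩ := this
    exact ⟨Nat.pair k 0, by simp [y]⟩
  have hrep : ∀ j N, ∃ i, N ≤ i ∧ y i = y j := by
    intro j N
    exact ⟨Nat.pair (Nat.unpair j).1 N, Nat.right_le_pair _ _, by simp [y]⟩
  have hyn : ∀ j, ‖y j‖ ≤ 1 := fun j => by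
    obtain ⟨n, hn⟩ := hy1 j; exact hFn n _ hn
  have hφy : ∀ i j, φ i (y j) = 0 := fun i j => by
    obtain ⟨n, hn⟩ := hy1 j; exact hφF i n _ hn
  let a : ℕ → ℕ → ℝ := fun k j => 1/(((j:ℝ)+1) * (1 + ‖u (2 * j + k)‖))
  have ha : ∀ k j, 0 < a k j := fun k j => by positivity
  have hv : ∀ k j, ‖a k j • u (2 * j + k)‖ ≤ 1/((j:ℝ)+1) := by
    intro k j
    rw [norm_smul, Real.norm_of_nonneg (ha k j).le]
    have e : a k j * ‖u (2*j+k)‖ = 1/((j:ℝ)+1) * (‖u (2*j+k)‖ / (1 + ‖u (2*j+k)‖)) := by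
      simp only [a]; field_simp
    rw [e]
    have h1 : ‖u (2*j+k)‖ / (1 + ‖u (2*j+k)‖) ≤ 1 := by
      rw [div_le_one (by positivity)]; linarith
    exact mul_le_of_le_one_right (by positivity) h1
  let w : ℕ → ℕ → Y := fun k j => y j + a k j • u (2 * j + k)
  have hw : ∀ k j, ‖w k j‖ ≤ 2 := by
    intro k j
    refine (norm_add_le _ _).trans ?_
    have h1 : 1/((j:ℝ)+1) ≤ 1 := by
      rw [div_le_one (by positivity)]; linarith [Nat.cast_nonneg (α := ℝ) j]
    linarith [hyn j, hv k j]
  have hscd : ∀ k, IsSCD (AH (w k)) := by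
    intro k
    refine AH_scd (w k) 2 (hw k) (fun j => φ (2 * j + k)) ?_ ?_
    · intro j
      simp [w, hφy, hφu, ha]
    · intro i j hij
      have : 2 * j + k ≠ 2 * i + k := by omega
      simp [w, hφy, hφu' _ _ this]
  have hbd : ∀ k, IsBounded (AH (w k)) := fun k =>
    Metric.isBounded_closedBall.subset (AH_ball (w k) 2 (hw k))
  have hint : AH (w 0) ∩ AH (w 1) = AH y := by
    apply Set.Subset.antisymm
    · rintro x ⟨hx0, hx1⟩
      refine AH_inter y (fun j => u (2 * j + 0)) (a 0) (hv 0) (fun j => φ (2 * j + 0))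
        (fun i j => hφy _ _) (fun j => hφu _) (fun i j hij => hφu' _ _ (by omega)) x hx0 ?_
      intro j
      have hsub := AH_min (w 1) (C := {z | φ (2 * j + 0) z = 0})
        ((LinearMap.ker (φ (2 * j + 0) : Y →ₗ[ℝ] ℝ)).convex)
        (isClosed_eq (φ _).continuous continuous_const) (by
          intro i
          have : 2 * j + 0 ≠ 2 * i + 1 := by omega
          have h1 : φ (2 * j + 0) (w 1 i) = 0 := by
            simp only [w, map_add, map_smul, hφy, hφu' _ _ this]; simp
          exact ⟨h1, by
            change φ (2 * j + 0) (- w 1 i) = 0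
            rw [map_neg, h1, neg_zero]⟩)
      exact hsub hx1
    · exact Set.subset_inter (AH_sub y (fun j => u (2 * j + 0)) (a 0) (hv 0) hrep)
        (AH_sub y (fun j => u (2 * j + 1)) (a 1) (hv 1) hrep)
  refine ⟨AH (w 0), AH (w 1), AH_convex _, AH_closed _, hbd 0, AH_symm _, hscd 0,
    AH_convex _, AH_closed _, hbd 1, AH_symm _, hscd 1, ?_, ?_⟩
  · rw [hint]; exact ⟨_, AH_mem y 0⟩
  · rw [hint]
    exact not_scd x₀ F hx₀ hx₀F mF hb y hy1 hy2
end

section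
/- Let X be a real Banach space with the Daugavet property. Then there exists a convex, closed, bounded set C ⊂ X which is almost SCD (aSCD) but not SCD. -/
open Bornology Set Pointwise

variable {X : Type*} [NormedAddCommGroup X] [NormedSpace ℝ X]

/-- A bounded set is almost SCD (aSCD) if it has a sequence of slices such that every set
meeting all of them has the whole set inside the closed absolutely convex hull. -/
def IsASCD {X : Type*} [NormedAddCommGroup X] [NormedSpace ℝ X] (A : Set X) : Prop :=
  ∃ V : ℕ → Set X, (∀ n, IsSlice A (V n)) ∧
    ∀ B : Set X, (∀ n, (B ∩ V n).Nonempty) → A ⊆ closure (absConvexHull ℝ B)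

namespace DaugC

theorem slice_aux {X : Type*} [NormedAddCommGroup X] [NormedSpace ℝ X]
    (h : DaugavetProperty X) (f : X →L[ℝ] ℝ) (hf : ‖f‖ = 1) (c : ℝ) (hc : c < 1)
    (x : X) (hx : ‖x‖ = 1) (ε : ℝ) (hε : 0 < ε) :
    ∃ (f' : X →L[ℝ] ℝ) (c' : ℝ), (∃ y, ‖y‖ ≤ 1 ∧ c' < f' y) ∧
      ∀ y, ‖y‖ ≤ 1 → c' < f' y → c < f y ∧ 2 - ε < ‖x + y‖ := by
  obtain ⟨δ, hδ, h1, h2, h3⟩ : ∃ δ : ℝ, 0 < δ ∧ 3 * δ ≤ ε ∧ 2 * δ ≤ 1 - c ∧ δ < 1 := by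
    refine ⟨min (ε / 3) (min ((1 - c) / 2) (1 / 2)), ?_, ?_, ?_, ?_⟩
    · have : 0 < 1 - c := by linarith
      positivity
    · linarith [min_le_left (ε / 3) (min ((1 - c) / 2) (1 / 2))]
    · linarith [min_le_right (ε / 3) (min ((1 - c) / 2) (1 / 2)),
        min_le_left ((1 - c) / 2) (1 / 2 : ℝ)]
    · linarith [min_le_right (ε / 3) (min ((1 - c) / 2) (1 / 2)),
        min_le_right ((1 - c) / 2) (1 / 2 : ℝ)]
  have hn := h f x
  rw [ContinuousLinearMap.norm_smulRight_apply, hf, hx] at hn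
  have hlt : 2 - δ < ‖ContinuousLinearMap.id ℝ X + f.smulRight x‖ := by rw [hn]; linarith
  obtain ⟨z0, hz0, hz1⟩ := ContinuousLinearMap.exists_lt_apply_of_lt_opNorm _ hlt
  obtain ⟨z, hz, hzf, hzn⟩ : ∃ z : X, ‖z‖ ≤ 1 ∧ 0 ≤ f z ∧ 2 - δ < ‖z + f z • x‖ := by
    replace hz1 : 2 - δ < ‖z0 + f z0 • x‖ := hz1
    rcases le_total 0 (f z0) with h0 | h0
    · exact ⟨z0, hz0.le, h0, hz1⟩
    · refine ⟨-z0, by simpa using hz0.le, by simpa using h0, ?_⟩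
      have e : -z0 + f (-z0) • x = -(z0 + f z0 • x) := by rw [map_neg]; module
      rw [e, norm_neg]
      exact hz1
  obtain ⟨φ, hφ, hφz⟩ := exists_dual_vector'' ℝ (z + f z • x)
  have hφz' : φ z + f z * φ x = ‖z + f z • x‖ := by simpa using hφz
  have b1 : ∀ y : X, ‖y‖ ≤ 1 → φ y ≤ 1 := fun y hy => by
    have := φ.le_opNorm y
    rw [Real.norm_eq_abs] at this
    have h4 : ‖φ‖ * ‖y‖ ≤ 1 := by nlinarith [norm_nonneg φ, norm_nonneg y]
    linarith [le_abs_self (φ y)]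
  have b2 : ∀ y : X, ‖y‖ ≤ 1 → f y ≤ 1 := fun y hy => by
    have := f.le_opNorm y
    rw [Real.norm_eq_abs] at this
    rw [hf] at this
    linarith [le_abs_self (f y)]
  have hz1 := b1 z hz
  have hz2 := b2 z hz
  have hx1 := b1 x hx.le
  have k1 : 1 - δ < f z * φ x := by linarith
  have k2 : 1 - δ < φ x := by nlinarith
  have k3 : 1 - δ < f z := by nlinarith
  have k4 : 1 - δ < φ z := by nlinarith
  refine ⟨φ + f, 2 - 2 * δ, ⟨z, hz, ?_⟩, ?_⟩
  · show 2 - 2 * δ < φ z + f z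
    linarith
  · intro y hy hy'
    replace hy' : 2 - 2 * δ < φ y + f y := hy'
    have := b1 y hy
    have := b2 y hy
    refine ⟨by linarith, ?_⟩
    have h5 := φ.le_opNorm (x + y)
    rw [Real.norm_eq_abs, map_add] at h5
    have h6 : ‖φ‖ * ‖x + y‖ ≤ ‖x + y‖ := by nlinarith [norm_nonneg (x + y)]
    linarith [le_abs_self (φ x + φ y)]

theorem slice_one {X : Type*} [NormedAddCommGroup X] [NormedSpace ℝ X]
    (h : DaugavetProperty X) (f : X →L[ℝ] ℝ) (c : ℝ) 
    (x : X) (hx : ‖x‖ = 1) (ε : ℝ) (hε : 0 < ε) (hne : ∃ y, ‖y‖ ≤ 1 ∧ c < f y) :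
    ∃ (f' : X →L[ℝ] ℝ) (c' : ℝ), (∃ y, ‖y‖ ≤ 1 ∧ c' < f' y) ∧
      ∀ y, ‖y‖ ≤ 1 → c' < f' y → c < f y ∧ 2 - ε < ‖x + y‖ := by
  obtain ⟨y0, hy0, hc⟩ := hne
  by_cases hf : f = 0
  · subst hf
    obtain ⟨φ, hφ, -⟩ := exists_dual_vector ℝ x (by rw [hx]; exact one_ne_zero)
    obtain ⟨f', c', h1, h2⟩ := slice_aux h φ hφ 0 one_pos x hx ε hε
    refine ⟨f', c', h1, fun y hy hy' => ⟨?_, (h2 y hy hy').2⟩⟩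
    simpa using hc
  · have hf' : 0 < ‖f‖ := norm_pos_iff.2 hf
    have hn : ‖(‖f‖⁻¹ • f)‖ = 1 := by
      rw [norm_smul, norm_inv, norm_norm, inv_mul_cancel₀ hf'.ne']
    have hc' : ‖f‖⁻¹ * c < 1 := by
      rw [inv_mul_lt_iff₀ hf', mul_one]
      have := f.le_opNorm y0
      rw [Real.norm_eq_abs] at this
      nlinarith [le_abs_self (f y0)]
    obtain ⟨f', c', h1, h2⟩ := slice_aux h _ hn _ hc' x hx ε hε
    refine ⟨f', c', h1, fun y hy hy' => ⟨?_, (h2 y hy hy').2⟩⟩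
    have := (h2 y hy hy').1
    simp only [smul_apply, smul_eq_mul] at this
    exact lt_of_mul_lt_mul_left this (by positivity)

theorem slice_fin {X : Type*} [NormedAddCommGroup X] [NormedSpace ℝ X]
    (h : DaugavetProperty X) (ε : ℝ) (hε : 0 < ε) (s : Set X) (hs : s.Finite) :
    (∀ x ∈ s, ‖x‖ = 1) → ∀ (f : X →L[ℝ] ℝ) (c : ℝ), (∃ y, ‖y‖ ≤ 1 ∧ c < f y) →
    ∃ y, ‖y‖ ≤ 1 ∧ c < f y ∧ ∀ x ∈ s, 2 - ε < ‖x + y‖ := by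
  induction s, hs using Set.Finite.induction_on with
  | empty =>
    rintro - f c ⟨y, h1, h2⟩
    exact ⟨y, h1, h2, by simp⟩
  | @insert a s ha hs ih =>
    intro hs1 f c hne
    obtain ⟨f', c', h1, h2⟩ := slice_one h f c a (hs1 a (by simp)) ε hε hne
    obtain ⟨y, hy, hcy, h3⟩ := ih (fun x hx => hs1 x (by simp [hx])) f' c' h1
    refine ⟨y, hy, (h2 y hy hcy).1, ?_⟩
    rintro x (rfl | hx)
    · exact (h2 y hy hcy).2
    · exact h3 x hx

/-- almost ell-one orthogonality -/
def Orth {X : Type*} [NormedAddCommGroup X] [NormedSpace ℝ X] (t : Set X) (ε : ℝ) (y : X) : Prop :=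
  ‖y‖ ≤ 1 ∧ ∀ z ∈ Submodule.span ℝ t, ∀ c : ℝ, (1 - ε) * (‖z‖ + |c|) ≤ ‖z + c • y‖

theorem orth_aux {X : Type*} [NormedAddCommGroup X] [NormedSpace ℝ X] (x y : X) (ε a c : ℝ)
    (hx : ‖x‖ ≤ 1) (hy : ‖y‖ ≤ 1) (hε : 0 < ε) (hxy : 2 - ε ≤ ‖x + y‖) (ha : 0 ≤ a) (hc : 0 ≤ c) :
    (1 - ε) * (a + c) ≤ ‖a • x + c • y‖ := by
  rcases le_total a c with hac | hac
  · have e : a • x + c • y = c • (x + y) - (c - a) • x := by module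
    have := norm_sub_norm_le (c • (x + y)) ((c - a) • x)
    rw [← e, norm_smul, norm_smul, Real.norm_of_nonneg hc, Real.norm_of_nonneg (sub_nonneg.2 hac)]
      at this
    nlinarith
  · have e : a • x + c • y = a • (x + y) - (a - c) • y := by module
    have := norm_sub_norm_le (a • (x + y)) ((a - c) • y)
    rw [← e, norm_smul, norm_smul, Real.norm_of_nonneg ha, Real.norm_of_nonneg (sub_nonneg.2 hac)]
      at this
    nlinarith

theorem slice_orth_aux {X : Type*} [NormedAddCommGroup X] [NormedSpace ℝ X]
    (h : DaugavetProperty X) (ε : ℝ) (hε : 0 < ε) (t : Set X) (ht : t.Finite)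
    (hS : ∃ x ∈ Submodule.span ℝ t, ‖x‖ = 1) (f : X →L[ℝ] ℝ) (c : ℝ) (hne : ∃ y, ‖y‖ ≤ 1 ∧ c < f y) :
    ∃ y, c < f y ∧ Orth t ε y := by
  have : FiniteDimensional ℝ (Submodule.span ℝ t) := FiniteDimensional.span_of_finite ℝ ht
  have hcomp : IsCompact (Metric.sphere (0 : Submodule.span ℝ t) 1) := isCompact_sphere _ _
  obtain ⟨s, hs, hsf, hcov⟩ := hcomp.finite_cover_balls (half_pos hε)
  obtain ⟨y, hy, hcy, hsy⟩ := slice_fin h (ε / 2) (half_pos hε) ((↑) '' s) (hsf.image _)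
    (by rintro _ ⟨x, hx, rfl⟩; simpa using hs hx) f c hne
  have key : ∀ x ∈ Submodule.span ℝ t, ‖x‖ = 1 → 2 - ε ≤ ‖x + y‖ := by
    intro x hx hx1
    have hm : (⟨x, hx⟩ : Submodule.span ℝ t) ∈ Metric.sphere (0 : Submodule.span ℝ t) 1 := by
      simpa using hx1
    obtain ⟨w, hw, hxw⟩ := mem_iUnion₂.1 (hcov hm)
    have h1 := hsy w ⟨w, hw, rfl⟩
    rw [Metric.mem_ball, dist_eq_norm] at hxw
    have h2 : ‖x - w‖ < ε / 2 := hxw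
    have h3 : (w : X) + y = (x + y) - (x - w) := by abel
    have h4 := norm_sub_le (x + y) (x - w)
    rw [← h3] at h4
    linarith
  have key2 : ∀ z ∈ Submodule.span ℝ t, ∀ c : ℝ, 0 ≤ c →
      (1 - ε) * (‖z‖ + c) ≤ ‖z + c • y‖ := by
    intro z hz c hc
    by_cases hz0 : z = 0
    · subst hz0
      obtain ⟨x, hx, hx1⟩ := hS
      have := orth_aux x y ε 0 c hx1.le hy hε (key x hx hx1) le_rfl hc
      simpa using this
    · have hz' : 0 < ‖z‖ := norm_pos_iff.2 hz0
      have hx1 : ‖‖z‖⁻¹ • z‖ = 1 := by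
        rw [norm_smul, norm_inv, norm_norm, inv_mul_cancel₀ hz'.ne']
      have := orth_aux _ y ε ‖z‖ c hx1.le hy hε
        (key _ (Submodule.smul_mem _ _ hz) hx1) hz'.le hc
      rwa [smul_smul, mul_inv_cancel₀ hz'.ne', one_smul] at this
  refine ⟨y, hcy, hy, fun z hz c => ?_⟩
  rcases le_total 0 c with hc | hc
  · rw [abs_of_nonneg hc]; exact key2 z hz c hc
  · rw [abs_of_nonpos hc]
    have := key2 (-z) (Submodule.neg_mem _ hz) (-c) (by linarith)
    rw [norm_neg] at this
    have e : -(z + c • y) = -z + (-c) • y := by module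
    rw [← norm_neg (z + c • y), e]
    exact this

theorem exists_norm_one {X : Type*} [NormedAddCommGroup X] [NormedSpace ℝ X]
    (h : DaugavetProperty X) : ∃ x : X, ‖x‖ = 1 := by
  have h1 := h 0 0
  have : Nontrivial X := by
    by_contra hX
    rw [not_nontrivial_iff_subsingleton] at hX
    have h2 : ContinuousLinearMap.id ℝ X = 0 := Subsingleton.elim _ _
    have h3 : (0 : X →L[ℝ] ℝ).smulRight (0 : X) = 0 := Subsingleton.elim _ _
    rw [h2, h3] at h1
    simp at h1
  obtain ⟨z, hz⟩ := exists_ne (0 : X)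
  have hz' : 0 < ‖z‖ := norm_pos_iff.2 hz
  exact ⟨‖z‖⁻¹ • z, by rw [norm_smul, norm_inv, norm_norm, inv_mul_cancel₀ hz'.ne']⟩

theorem Orth.mono {X : Type*} [NormedAddCommGroup X] [NormedSpace ℝ X] {s t : Set X} (hst : s ⊆ t)
    {ε δ : ℝ} (hε : ε ≤ δ) {y : X} (hy : Orth t ε y) : Orth s δ y := by
  refine ⟨hy.1, fun z hz c => le_trans ?_ (hy.2 z (Submodule.span_mono hst hz) c)⟩
  have : 0 ≤ ‖z‖ + |c| := by positivity
  nlinarith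

theorem slice_orth {X : Type*} [NormedAddCommGroup X] [NormedSpace ℝ X]
    (h : DaugavetProperty X) (ε : ℝ) (hε : 0 < ε) (t : Set X) (ht : t.Finite)
    (f : X →L[ℝ] ℝ) (c : ℝ) (hne : ∃ y, ‖y‖ ≤ 1 ∧ c < f y) :
    ∃ y, c < f y ∧ Orth t ε y := by
  obtain ⟨e, he⟩ := exists_norm_one h
  obtain ⟨y, h1, h2⟩ := slice_orth_aux h ε hε (insert e t) (ht.insert e)
    ⟨e, Submodule.subset_span (by simp), he⟩ f c hne
  exact ⟨y, h1, h2.mono (subset_insert _ _) le_rfl⟩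

theorem mem_hull_orth {X : Type*} [NormedAddCommGroup X] [NormedSpace ℝ X]
    (h : DaugavetProperty X) (ε : ℝ) (hε : 0 < ε) (t : Set X) (ht : t.Finite)
    (d : X) (hd : ‖d‖ ≤ 1) : d ∈ closure (convexHull ℝ {y | Orth t ε y}) := by
  by_contra hn
  obtain ⟨f, s, h1, h2⟩ := geometric_hahn_banach_closed_point
    (convex_convexHull ℝ {y | Orth t ε y}).closure isClosed_closure hn
  obtain ⟨y, hy1, hy2⟩ := slice_orth h ε hε t ht f s ⟨d, hd, h2⟩
  exact absurd (h1 y (subset_closure (subset_convexHull ℝ _ hy2))) (by linarith)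

theorem exists_countable {X : Type*} [NormedAddCommGroup X] [NormedSpace ℝ X]
    (S : Set X) (d : X) (hd : d ∈ closure (convexHull ℝ S)) :
    ∃ W : Set X, W.Countable ∧ W ⊆ S ∧ d ∈ closure (convexHull ℝ W) := by
  rw [Metric.mem_closure_iff] at hd
  have : ∀ n : ℕ, ∃ t : Finset X, (t : Set X) ⊆ S ∧ ∃ b ∈ convexHull ℝ (t : Set X),
      dist d b < 1 / ((n : ℝ) + 1) := by
    intro n
    obtain ⟨b, hb, hdb⟩ := hd (1 / ((n : ℝ) + 1)) (by positivity)
    rw [convexHull_eq_union_convexHull_finite_subsets] at hb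
    obtain ⟨t, ht, hbt⟩ := mem_iUnion₂.1 hb
    exact ⟨t, ht, b, hbt, hdb⟩
  choose t ht b hb hdb using this
  refine ⟨⋃ n, (t n : Set X), countable_iUnion fun n => (t n).countable_toSet,
    iUnion_subset ht, ?_⟩
  rw [Metric.mem_closure_iff]
  intro ε hε
  obtain ⟨n, hn⟩ := exists_nat_one_div_lt hε
  exact ⟨b n, convexHull_mono (subset_iUnion (fun n => (t n : Set X)) n) (hb n),
    (hdb n).trans hn⟩

/-- closing-off: a countable set in the ball that is hereditarily almost orthogonal -/
theorem exists_D {X : Type*} [NormedAddCommGroup X] [NormedSpace ℝ X]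
    (h : DaugavetProperty X) (D0 : Set X) (hD0 : D0.Countable) (hb : ∀ x ∈ D0, ‖x‖ ≤ 1) :
    ∃ D : Set X, D.Countable ∧ D0 ⊆ D ∧ (∀ x ∈ D, ‖x‖ ≤ 1) ∧
      ∀ d ∈ D, ∀ t : Set X, t.Finite → t ⊆ D → ∀ ε > 0,
        d ∈ closure (convexHull ℝ {y ∈ D | Orth t ε y}) := by
  have hW : ∀ (d : X) (t : Set X) (k : ℕ), ∃ W : Set X, W.Countable ∧
      (∀ y ∈ W, ‖y‖ ≤ 1) ∧ (‖d‖ ≤ 1 → t.Finite →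
      d ∈ closure (convexHull ℝ {y ∈ W | Orth t (1 / ((k : ℝ) + 1)) y})) := by
    intro d t k
    by_cases hc : ‖d‖ ≤ 1 ∧ t.Finite
    · obtain ⟨W, h1, h2, h3⟩ := exists_countable _ d
        (mem_hull_orth h (1 / ((k : ℝ) + 1)) (by positivity) t hc.2 d hc.1)
      refine ⟨W, h1, fun y hy => (h2 hy).1, fun _ _ => ?_⟩
      convert h3 using 3
      ext y
      exact ⟨fun hy => hy.1, fun hy => ⟨hy, h2 hy⟩⟩
    · exact ⟨∅, countable_empty, by simp, fun h1 h2 => absurd ⟨h1, h2⟩ hc⟩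
  choose W hW1 hW2 hW3 using hW
  let step : Set X → Set X := fun A =>
    A ∪ ⋃ d ∈ A, ⋃ t ∈ {t : Set X | t.Finite ∧ t ⊆ A}, ⋃ k : ℕ, W d t k
  let D : ℕ → Set X := fun n => step^[n] D0
  have hDs : ∀ n, D (n + 1) = step (D n) := fun n => Function.iterate_succ_apply' _ _ _
  have hmono : Monotone D := monotone_nat_of_le_succ fun n => by
    rw [hDs]; exact subset_union_left
  have hcount : ∀ n, (D n).Countable := by
    intro n
    induction n with
    | zero => exact hD0
    | succ n ih =>
      rw [hDs]
      refine ih.union (ih.biUnion fun d _ => ?_)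
      exact (countable_ofPred_finite_subset ih).biUnion fun t _ =>
        countable_iUnion fun k => hW1 d t k
  have hbd : ∀ n, ∀ x ∈ D n, ‖x‖ ≤ 1 := by
    intro n
    induction n with
    | zero => exact hb
    | succ n ih =>
      rw [hDs]
      rintro x (hx | hx)
      · exact ih x hx
      · simp only [mem_iUnion] at hx
        obtain ⟨d, _, t, _, k, hk⟩ := hx
        exact hW2 d t k x hk
  refine ⟨⋃ n, D n, countable_iUnion hcount, subset_iUnion D 0, ?_, ?_⟩
  · intro x hx
    obtain ⟨n, hn⟩ := mem_iUnion.1 hx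
    exact hbd n x hn
  · intro d hd t htf ht ε hε
    obtain ⟨n, hn⟩ := mem_iUnion.1 hd
    obtain ⟨m, hm⟩ : ∃ m, t ⊆ D m := by
      have := (hmono.directed_le).exists_mem_subset_of_finset_subset_biUnion
        (s := htf.toFinset) (by simpa using ht)
      simpa using this
    obtain ⟨k, hk⟩ := exists_nat_one_div_lt hε
    have h1 := hW3 d t k (hbd n d hn) htf
    refine closure_mono (convexHull_mono ?_) h1
    rintro y ⟨hy, hyo⟩
    refine ⟨mem_iUnion.2 ⟨max n m + 1, ?_⟩, hyo.mono subset_rfl hk.le⟩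
    rw [hDs]
    right
    simp only [mem_iUnion]
    exact ⟨d, hmono (le_max_left n m) hn, t, ⟨htf, hm.trans (hmono (le_max_right n m))⟩, k, hy⟩

noncomputable def eps (n : ℕ) : ℝ := 1 / ((n : ℝ) + 2) ^ 2

theorem eps_pos (n : ℕ) : 0 < eps n := by unfold eps; positivity

noncomputable def aa (n : ℕ) : ℝ := ((n : ℝ) + 2) / (2 * ((n : ℝ) + 1))

theorem aa_succ (n : ℕ) : aa (n + 1) = aa n * (1 - eps n) := by
  unfold aa eps
  push_cast
  field_simp
  ring

theorem half_le_aa (n : ℕ) : 1 / 2 ≤ aa n := by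
  unfold aa
  rw [div_le_div_iff₀ (by norm_num) (by positivity)]
  linarith

theorem aa_le_one (n : ℕ) : aa n ≤ 1 := by
  unfold aa
  rw [div_le_one (by positivity)]
  have : (0 : ℝ) ≤ n := by positivity
  linarith

theorem eps_le (n : ℕ) : eps n ≤ 1 / 4 := by
  unfold eps
  rw [div_le_div_iff₀ (by positivity) (by norm_num)]
  have : (0 : ℝ) ≤ n := by positivity
  nlinarith

/-- sequence construction -/
theorem exists_seq {X : Type*} [NormedAddCommGroup X] [NormedSpace ℝ X]
    (D : Set X) (t0 : Set X) (ht0 : t0.Finite) (ht0D : t0 ⊆ D) (P : ℕ → X → Prop)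
    (hP : ∀ n, ∀ t : Set X, t.Finite → t ⊆ D → ∃ y ∈ D, Orth t (eps n) y ∧ P n y) :
    ∃ (y : ℕ → X) (t : ℕ → Set X), t 0 = t0 ∧ (∀ n, t (n + 1) = insert (y n) (t n)) ∧
      ∀ n, Orth (t n) (eps n) (y n) ∧ P n (y n) ∧ y n ∈ D := by
  have hP' : ∀ n, ∀ t : Set X, ∃ y, t.Finite → t ⊆ D → y ∈ D ∧ Orth t (eps n) y ∧ P n y := by
    intro n t
    by_cases hc : t.Finite ∧ t ⊆ D
    · obtain ⟨y, hy⟩ := hP n t hc.1 hc.2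
      exact ⟨y, fun _ _ => hy⟩
    · exact ⟨0, fun h1 h2 => absurd ⟨h1, h2⟩ hc⟩
  choose g hg using hP'
  let t : ℕ → Set X := fun n => Nat.rec t0 (fun n s => insert (g n s) s) n
  have ht : ∀ n, t (n + 1) = insert (g n (t n)) (t n) := fun n => rfl
  have hfin : ∀ n, (t n).Finite ∧ t n ⊆ D := by
    intro n
    induction n with
    | zero => exact ⟨ht0, ht0D⟩
    | succ n ih =>
      rw [ht]
      exact ⟨ih.1.insert _, insert_subset (hg n _ ih.1 ih.2).1 ih.2⟩
  refine ⟨fun n => g n (t n), t, rfl, ht, fun n => ?_⟩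
  obtain ⟨h1, h2, h3⟩ := hg n _ (hfin n).1 (hfin n).2
  exact ⟨h2, h3, h1⟩

theorem seq_bound {X : Type*} [NormedAddCommGroup X] [NormedSpace ℝ X]
    (y : ℕ → X) (t : ℕ → Set X) (ht : ∀ n, t (n + 1) = insert (y n) (t n))
    (hy : ∀ n, Orth (t n) (eps n) (y n)) (k : ℕ) (z : X) (hz : z ∈ Submodule.span ℝ (t k))
    (w : X) (hw : w ∈ Submodule.span ℝ (y '' {i | k ≤ i})) : 1 / 2 * ‖z‖ ≤ ‖z + w‖ := by
  have tmono : Monotone t := monotone_nat_of_le_succ fun n => by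
    rw [ht]; exact subset_insert _ _
  have ymem : ∀ i n, i < n → y i ∈ t n := by
    intro i n hin
    refine tmono (Nat.succ_le_of_lt hin) ?_
    rw [Nat.succ_eq_add_one, ht]
    exact mem_insert _ _
  have key : ∀ n, k ≤ n → ∀ w ∈ Submodule.span ℝ (y '' {i | k ≤ i ∧ i < n}),
      aa n * ‖z‖ ≤ aa k * ‖z + w‖ := by
    intro n hn
    induction n, hn using Nat.le_induction with
    | base =>
      intro w hw
      have : {i | k ≤ i ∧ i < k} = (∅ : Set ℕ) := by ext i; simp
      rw [this, image_empty, Submodule.span_empty, Submodule.mem_bot] at hw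
      simp [hw]
    | succ n hn ih =>
      intro w hw
      have : {i | k ≤ i ∧ i < n + 1} = insert n {i | k ≤ i ∧ i < n} := by
        ext i
        simp only [mem_ofPred_eq, mem_insert_iff]
        omega
      rw [this, image_insert_eq] at hw
      obtain ⟨c, w', hw', rfl⟩ := Submodule.mem_span_insert.1 hw
      have h1 := ih w' hw'
      have hmem : z + w' ∈ Submodule.span ℝ (t n) := by
        refine Submodule.add_mem _ (Submodule.span_mono (tmono hn) hz) ?_
        refine Submodule.span_mono ?_ hw'
        rintro _ ⟨i, hi, rfl⟩
        exact ymem i n hi.2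
      have h2 := (hy n).2 _ hmem c
      have e : z + (c • y n + w') = z + w' + c • y n := by abel
      rw [e, aa_succ]
      have h3 := eps_le n
      have h4 := half_le_aa k
      have h5 : (1 - eps n) * ‖z + w'‖ ≤ ‖z + w' + c • y n‖ :=
        le_trans (by nlinarith [abs_nonneg c]) h2
      calc aa n * (1 - eps n) * ‖z‖ = (1 - eps n) * (aa n * ‖z‖) := by ring
        _ ≤ (1 - eps n) * (aa k * ‖z + w'‖) := by
            apply mul_le_mul_of_nonneg_left h1; linarith
        _ = aa k * ((1 - eps n) * ‖z + w'‖) := by ring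
        _ ≤ _ := mul_le_mul_of_nonneg_left h5 (by linarith)
  obtain ⟨n, hn, hwn⟩ : ∃ n, k ≤ n ∧ w ∈ Submodule.span ℝ (y '' {i | k ≤ i ∧ i < n}) := by
    induction hw using Submodule.span_induction with
    | mem x hx =>
      obtain ⟨i, hi, rfl⟩ := hx
      have hi' : k ≤ i := hi
      exact ⟨i + 1, by omega, Submodule.subset_span ⟨i, ⟨hi, by omega⟩, rfl⟩⟩
    | zero => exact ⟨k, le_rfl, Submodule.zero_mem _⟩
    | add a b _ _ iha ihb =>
      obtain ⟨n, hn, ha⟩ := iha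
      obtain ⟨m, hm, hb⟩ := ihb
      refine ⟨max n m, le_max_of_le_left hn, Submodule.add_mem _ ?_ ?_⟩
      · refine Submodule.span_mono (image_mono ?_) ha
        rintro i ⟨h1, h2⟩
        exact ⟨h1, lt_max_of_lt_left h2⟩
      · refine Submodule.span_mono (image_mono ?_) hb
        rintro i ⟨h1, h2⟩
        exact ⟨h1, lt_max_of_lt_right h2⟩
    | smul c a _ iha =>
      obtain ⟨n, hn, ha⟩ := iha
      exact ⟨n, hn, Submodule.smul_mem _ _ ha⟩
  have h1 := key n hn w hwn
  have h2 := half_le_aa n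
  have h3 := aa_le_one k
  nlinarith [norm_nonneg z, norm_nonneg (z + w)]

/-- Hahn-Banach: functional killing a subspace at positive distance from a point. -/
theorem exists_fun {X : Type*} [NormedAddCommGroup X] [NormedSpace ℝ X]
    (M : Submodule ℝ X) (x : X) (δ : ℝ) (hδ : 0 < δ) (hM : ∀ m ∈ M, δ ≤ ‖x + m‖) :
    ∃ g : X →L[ℝ] ℝ, g x = 1 ∧ (∀ m ∈ M, g m = 0) ∧ ∀ y, |g y| ≤ δ⁻¹ * ‖y‖ := by
  have hq : δ ≤ ‖(M.mkQL x : X ⧸ M)‖ := by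
    have : ‖(M.mkQL x : X ⧸ M)‖ = Metric.infDist x M :=
      QuotientAddGroup.norm_mk (S := M.toAddSubgroup) x
    rw [this, Metric.le_infDist ⟨0, M.zero_mem⟩]
    intro m hm
    rw [dist_eq_norm, sub_eq_add_neg]
    exact hM _ (M.neg_mem hm)
  have hpos := hδ.trans_le hq
  obtain ⟨g, hg1, hg2⟩ := exists_dual_vector ℝ (M.mkQL x : X ⧸ M) hpos.ne'
  have hg2' : g (M.mkQL x) = ‖(M.mkQL x : X ⧸ M)‖ := by simpa using hg2
  refine ⟨‖(M.mkQL x : X ⧸ M)‖⁻¹ • (g.comp M.mkQL), ?_, ?_, ?_⟩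
  · show ‖(M.mkQL x : X ⧸ M)‖⁻¹ * g (M.mkQL x) = 1
    rw [hg2', inv_mul_cancel₀ hpos.ne']
  · intro m hm
    show ‖(M.mkQL x : X ⧸ M)‖⁻¹ * g (M.mkQL m) = 0
    have : M.mkQL m = 0 := by
      rw [Submodule.mkQL_apply]; exact (Submodule.Quotient.mk_eq_zero M).2 hm
    rw [this, map_zero, mul_zero]
  · intro y
    show |‖(M.mkQL x : X ⧸ M)‖⁻¹ * g (M.mkQL y)| ≤ _
    rw [abs_mul, abs_of_pos (inv_pos.2 hpos)]
    have h1 := g.le_opNorm (M.mkQL y)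
    rw [hg1, one_mul, Real.norm_eq_abs] at h1
    have h2 : ‖(M.mkQL y : X ⧸ M)‖ ≤ ‖y‖ := Submodule.Quotient.norm_mk_le M y
    have h3 : ‖(M.mkQL x : X ⧸ M)‖⁻¹ ≤ δ⁻¹ := inv_anti₀ hδ hq
    exact mul_le_mul h3 (h1.trans h2) (abs_nonneg _) (by positivity)

/-- biorthogonal system -/
theorem exists_biorth {X : Type*} [NormedAddCommGroup X] [NormedSpace ℝ X]
    (h : DaugavetProperty X) :
    ∃ (y : ℕ → X) (g : ℕ → X →L[ℝ] ℝ), (∀ n, ‖y n‖ ≤ 1) ∧ (∀ n, g n (y n) = 1) ∧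
      (∀ n m, m ≠ n → g n (y m) = 0) ∧ ∀ n x, |g n x| ≤ 4 * ‖x‖ := by
  obtain ⟨y, t, ht0, ht, hy⟩ := exists_seq (X := X) univ ∅ finite_empty (subset_univ _)
    (fun _ _ => True) (by
      intro n s hs _
      obtain ⟨y, -, hy⟩ := slice_orth h (eps n) (eps_pos n) s hs 0 (-1) ⟨0, by simp, by simp⟩
      exact ⟨y, mem_univ _, hy, trivial⟩)
  have hy' : ∀ n, Orth (t n) (eps n) (y n) := fun n => (hy n).1
  have tsub : ∀ n, t n ⊆ y '' {i | i < n} ∧ y '' {i | i < n} ⊆ t n := by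
    intro n
    induction n with
    | zero => simp [ht0]
    | succ n ih =>
      have : {i | i < n + 1} = insert n {i | i < n} := by
        ext i
        simp only [mem_ofPred_eq, mem_insert_iff]
        omega
      rw [ht, this, image_insert_eq]
      exact ⟨insert_subset_insert ih.1, insert_subset_insert ih.2⟩
  have hex : ∀ n, ∃ g : X →L[ℝ] ℝ, g (y n) = 1 ∧
      (∀ m ∈ Submodule.span ℝ (y '' {i | i ≠ n}), g m = 0) ∧
      ∀ x, |g x| ≤ (3 / 8 : ℝ)⁻¹ * ‖x‖ := by
    intro n
    refine exists_fun _ _ _ (by norm_num) ?_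
    intro m hm
    have : {i | i ≠ n} = {i | i < n} ∪ {i | n + 1 ≤ i} := by
      ext i
      simp only [mem_ofPred_eq, mem_union]
      omega
    rw [this, image_union, Submodule.span_union] at hm
    obtain ⟨z, hz, w, hw, rfl⟩ := Submodule.mem_sup.1 hm
    have hz' := Submodule.span_mono (tsub n).2 hz
    have hzy : z + y n ∈ Submodule.span ℝ (t (n + 1)) := by
      rw [ht]
      exact Submodule.add_mem _ (Submodule.span_mono (subset_insert _ _) hz')
        (Submodule.subset_span (mem_insert _ _))
    have h1 := seq_bound y t ht hy' (n + 1) (z + y n) hzy w hw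
    have h2 := (hy' n).2 z hz' 1
    have h3 := eps_le n
    rw [one_smul, abs_one] at h2
    have e : y n + (z + w) = z + y n + w := by abel
    rw [e]
    nlinarith [norm_nonneg z]
  choose g hg1 hg2 hg3 using hex
  refine ⟨y, g, fun n => (hy' n).1, hg1, fun n m hmn => hg2 n _ (Submodule.subset_span ⟨m, hmn, rfl⟩),
    fun n x => (hg3 n x).trans ?_⟩
  have := norm_nonneg x
  norm_num
  linarith

theorem hull_subset {X : Type*} [NormedAddCommGroup X] [NormedSpace ℝ X] {A T : Set X}
    (hT : Convex ℝ T) (hc : IsClosed T) (h : A ⊆ T) : closure (convexHull ℝ A) ⊆ T :=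
  closure_minimal (convexHull_min h hT) hc

theorem convex_halfspace_le' {X : Type*} [NormedAddCommGroup X] [NormedSpace ℝ X]
    (g : X →L[ℝ] ℝ) (c : ℝ) : Convex ℝ {x | g x ≤ c} ∧ IsClosed {x | g x ≤ c} :=
  ⟨convex_halfSpace_le g.toLinearMap.isLinear c, isClosed_le g.continuous continuous_const⟩

theorem expose {X : Type*} [NormedAddCommGroup X] [NormedSpace ℝ X] (A : Set X) (e : X) (he : e ∈ A)
    (G : X →L[ℝ] ℝ) (hG : G ≠ 0) (K : ℝ) (hK : 0 < K)
    (hA : ∀ x ∈ A, ‖x - e‖ ≤ K * (G e - G x)) (ε : ℝ) (hε : 0 < ε) :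
    IsSlice (closure (convexHull ℝ A)) (sliceSet (closure (convexHull ℝ A)) G ε) ∧
    ∀ x ∈ sliceSet (closure (convexHull ℝ A)) G ε, ‖x - e‖ ≤ K * ε := by
  have hC : ∀ x ∈ closure (convexHull ℝ A), ‖x - e‖ ≤ K * (G e - G x) := by
    refine hull_subset (T := {x | ‖x - e‖ ≤ K * (G e - G x)}) ?_ ?_ hA
    · intro x hx y hy a b ha hb hab
      have hx' : ‖x - e‖ ≤ K * (G e - G x) := hx
      have hy' : ‖y - e‖ ≤ K * (G e - G y) := hy
      show ‖a • x + b • y - e‖ ≤ K * (G e - G (a • x + b • y))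
      have e1 : a • x + b • y - e = a • (x - e) + b • (y - e) := by
        have : b = 1 - a := by linarith
        subst this
        module
      have h1 := norm_add_le (a • (x - e)) (b • (y - e))
      rw [norm_smul, norm_smul, Real.norm_of_nonneg ha, Real.norm_of_nonneg hb] at h1
      rw [e1, map_add, map_smul, map_smul, smul_eq_mul, smul_eq_mul]
      have h2 := mul_le_mul_of_nonneg_left hx' ha
      have h3 := mul_le_mul_of_nonneg_left hy' hb
      have h4 : b = 1 - a := by linarith
      subst h4
      linarith
    · exact isClosed_le (by fun_prop) (by fun_prop)
  have heC : e ∈ closure (convexHull ℝ A) := subset_closure (subset_convexHull ℝ _ he)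
  have hmax : IsGreatest (G '' closure (convexHull ℝ A)) (G e) := by
    refine ⟨⟨e, heC, rfl⟩, ?_⟩
    rintro _ ⟨x, hx, rfl⟩
    have h1 := hC x hx
    have h2 := norm_nonneg (x - e)
    by_contra h3
    push Not at h3
    nlinarith
  have hs : sSup (G '' closure (convexHull ℝ A)) = G e := hmax.csSup_eq
  refine ⟨⟨⟨e, heC, ?_⟩, G, hG, ε, hε, rfl⟩, ?_⟩
  · rw [hs]; linarith
  · rintro x ⟨hx, hx'⟩
    rw [hs] at hx'
    refine (hC x hx).trans ?_
    apply mul_le_mul_of_nonneg_left _ hK.le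
    linarith

theorem ascd_of {X : Type*} [NormedAddCommGroup X] [NormedSpace ℝ X] {ι : Type*} [Countable ι]
    [Nonempty ι] (A : Set X) (e : ι → X) (he : ∀ i, e i ∈ A) (G : ι → X →L[ℝ] ℝ)
    (hG : ∀ i, G i ≠ 0) (K : ℝ) (hK : 0 < K)
    (hA : ∀ i, ∀ x ∈ A, ‖x - e i‖ ≤ K * (G i (e i) - G i x))
    (hE : ∀ T : Set X, AbsConvex ℝ T → (∀ i, e i ∈ T) → A ⊆ T) :
    IsASCD (closure (convexHull ℝ A)) := by
  obtain ⟨p, hp⟩ := exists_surjective_nat (ι × ℕ)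
  have hpos : ∀ n : ℕ, (0 : ℝ) < 1 / ((n : ℝ) + 1) := fun n => by positivity
  refine ⟨fun n => sliceSet (closure (convexHull ℝ A)) (G (p n).1) (1 / (((p n).2 : ℝ) + 1)),
    fun n => (expose A _ (he _) _ (hG _) K hK (hA _) _ (hpos _)).1, ?_⟩
  intro B hB
  have hT : AbsConvex ℝ (closure (absConvexHull ℝ B)) := absConvex_absConvexHull.closure
  refine hull_subset hT.2 isClosed_closure (hE _ hT ?_)
  intro i
  refine closure_mono (subset_absConvexHull (𝕜 := ℝ)) ?_
  rw [Metric.mem_closure_iff]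
  intro δ hδ
  obtain ⟨k, hk⟩ := exists_nat_one_div_lt (div_pos hδ hK)
  obtain ⟨n, hn⟩ := hp (i, k)
  obtain ⟨b, hb, hbs⟩ := hB n
  refine ⟨b, hb, ?_⟩
  have h1 := (expose A _ (he _) _ (hG _) K hK (hA _) _ (hpos _)).2 b hbs
  rw [hn] at h1
  rw [dist_comm, dist_eq_norm]
  refine h1.trans_lt ?_
  rw [lt_div_iff₀ hK] at hk
  show K * (1 / ((k : ℝ) + 1)) < δ
  linarith

theorem not_scd_of {X : Type*} [NormedAddCommGroup X] [NormedSpace ℝ X]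
    (D : Set X) (hDb : ∀ x ∈ D, ‖x‖ ≤ 1)
    (hD : ∀ d ∈ D, ∀ t : Set X, t.Finite → t ⊆ D → ∀ ε > 0,
        d ∈ closure (convexHull ℝ {y ∈ D | Orth t ε y}))
    (u x0 : X) (hu : u ∈ D) (hx0 : x0 ∈ D) (δ : ℝ) (hδ : 0 < δ) (hux : ∀ c : ℝ, δ ≤ ‖x0 + c • u‖)
    (f : X →L[ℝ] ℝ) (Q : X → X) (hQ : ∀ x, Q x = x + (1 - f x) • u) (hfu : f u = 1)
    (E : Set X) (hfE : ∀ x ∈ E, f x = 1) (R : ℝ) (hER : ∀ x ∈ E, ‖x‖ ≤ R) :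
    ¬ IsSCD (closure (convexHull ℝ (E ∪ (fun x => - Q x) '' D))) := by
  rintro ⟨V, hV, hdet⟩
  have hstep : ∀ n, ∀ t : Set X, t.Finite → t ⊆ D →
      ∃ y ∈ D, Orth t (eps n) y ∧ ((E ∩ V n).Nonempty ∨ - Q y ∈ V n) := by
    intro n t ht htD
    by_cases hE : (E ∩ V n).Nonempty
    · have h1 := hD x0 hx0 t ht htD (eps n) (eps_pos n)
      obtain ⟨y, hy⟩ := convexHull_nonempty_iff.1 (closure_nonempty_iff.1 ⟨_, h1⟩)
      exact ⟨y, hy.1, hy.2, Or.inl hE⟩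
    · obtain ⟨⟨x, hx⟩, g, -, ε, hε, hVn⟩ := hV n
      set C := closure (convexHull ℝ (E ∪ (fun x => - Q x) '' D)) with hC
      have hsub : E ∪ (fun x => - Q x) '' D ⊆ C :=
        (subset_convexHull ℝ _).trans subset_closure
      set c := sSup (g '' C) - ε with hc
      have hVn' : ∀ x, x ∈ V n ↔ x ∈ C ∧ c < g x := by
        intro x; rw [hVn]; rfl
      obtain ⟨d, hd, hdc⟩ : ∃ d ∈ D, c < g (- Q d) := by
        by_contra hno
        push Not at hno
        have : C ⊆ {x | g x ≤ c} := by
          refine hull_subset (convex_halfspace_le' g c).1 (convex_halfspace_le' g c).2 ?_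
          rintro z (hz | ⟨d, hd, rfl⟩)
          · by_contra hlt
            have hlt' : c < g z := not_le.1 hlt
            exact hE ⟨z, hz, (hVn' z).2 ⟨hsub (Or.inl hz), hlt'⟩⟩
          · exact hno d hd
        have h1 : g x ≤ c := this ((hVn' x).1 hx).1
        linarith [((hVn' x).1 hx).2]
      obtain ⟨y, hy, hyc⟩ : ∃ y ∈ {y ∈ D | Orth t (eps n) y}, c < g (- Q y) := by
        by_contra hno
        push Not at hno
        -- g (-Q x) = -(g x) - (1 - f x) g u
        have hlin : ∀ x, g (- Q x) = (g u • f - g) x - g u := by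
          intro x
          show _ = (g u * f x - g x) - g u
          rw [hQ, map_neg, map_add, map_smul, smul_eq_mul]
          ring
        have hT := convex_halfspace_le' (g u • f - g) (c + g u)
        have h1 : d ∈ {x | (g u • f - g) x ≤ c + g u} := by
          refine hull_subset hT.1 hT.2 ?_ (hD d hd t ht htD (eps n) (eps_pos n))
          intro y hy
          have := hno y hy
          rw [hlin] at this
          show (g u • f - g) y ≤ c + g u
          linarith
        have h2 : (g u • f - g) d ≤ c + g u := h1
        rw [hlin] at hdc
        linarith
      exact ⟨y, hy.1, hy.2, Or.inr ((hVn' _).2 ⟨hsub (Or.inr ⟨y, hy.1, rfl⟩), hyc⟩)⟩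
  obtain ⟨y, t, ht0, ht, hy⟩ := exists_seq D {u, x0} (by simp)
    (insert_subset hu (singleton_subset_iff.2 hx0)) _ hstep
  obtain ⟨φ, hφ1, hφ2, -⟩ := exists_fun (Submodule.span ℝ (insert u (range y))) x0 (1 / 2 * δ)
    (by positivity) (by
      intro m hm
      obtain ⟨c, w, hw, rfl⟩ := Submodule.mem_span_insert.1 hm
      have h1 := seq_bound y t ht (fun n => (hy n).1) 0 (x0 + c • u)
        (by
          rw [ht0]
          exact Submodule.add_mem _ (Submodule.subset_span (by simp))
            (Submodule.smul_mem _ _ (Submodule.subset_span (by simp)))) w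
        (by
          have : {i : ℕ | 0 ≤ i} = univ := by ext i; simp
          rwa [this, image_univ])
      rw [add_assoc] at h1
      linarith [hux c])
  have hφu : φ u = 0 := hφ2 _ (Submodule.subset_span (mem_insert _ _))
  have hφy : ∀ n, φ (y n) = 0 := fun n =>
    hφ2 _ (Submodule.subset_span (mem_insert_of_mem _ ⟨n, rfl⟩))
  have hφQ : ∀ x, φ (Q x) = φ x := by intro x; simp [hQ, hφu]
  have hfQ : ∀ x, f (Q x) = 1 := by intro x; simp [hQ, hfu]
  have hR : ∀ x ∈ E, -(‖φ‖ * |R|) ≤ φ x := by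
    intro x hx
    have h1 := φ.le_opNorm x
    rw [Real.norm_eq_abs] at h1
    have h2 : ‖φ‖ * ‖x‖ ≤ ‖φ‖ * |R| :=
      mul_le_mul_of_nonneg_left ((hER x hx).trans (le_abs_self R)) (norm_nonneg _)
    linarith [neg_abs_le (φ x)]
  set s : ℝ := ‖φ‖ * |R| with hs
  have hs0 : 0 ≤ s := by positivity
  have hB := hdet (E ∪ range fun n => - Q (y n)) (by
    intro n
    rcases (hy n).2.1 with ⟨z, hz, hzV⟩ | hyV
    · exact ⟨z, Or.inl hz, hzV⟩
    · exact ⟨_, Or.inr ⟨n, rfl⟩, hyV⟩)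
  have hT := convex_halfspace_le' (-(φ + s • f)) s
  have hx0C : - Q x0 ∈ closure (convexHull ℝ (E ∪ (fun x => - Q x) '' D)) :=
    subset_closure (subset_convexHull ℝ _ (Or.inr ⟨x0, hx0, rfl⟩))
  have happ : ∀ x, (-(φ + s • f)) x = -(φ x + s * f x) := fun x => rfl
  have h1 : - Q x0 ∈ {x | (-(φ + s • f)) x ≤ s} := by
    refine hull_subset hT.1 hT.2 ?_ (hB hx0C)
    rintro z (hz | ⟨n, rfl⟩)
    · show (-(φ + s • f)) z ≤ s
      rw [happ, hfE z hz]
      linarith [hR z hz]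
    · show (-(φ + s • f)) (- Q (y n)) ≤ s
      rw [happ, map_neg, map_neg, hφQ, hfQ, hφy]
      linarith
  have h2 : (-(φ + s • f)) (- Q x0) ≤ s := h1
  rw [happ, map_neg, map_neg, hφQ, hfQ, hφ1] at h2
  linarith

def sg (b : Bool) : ℝ := if b then 1 else -1

theorem sg_mul (b : Bool) : sg b * sg b = 1 := by cases b <;> simp [sg]
theorem sg_abs (b : Bool) : |sg b| = 1 := by cases b <;> simp [sg]
theorem sg_ne {b b' : Bool} (h : b' ≠ b) : sg b * sg b' = -1 := by
  cases b <;> cases b' <;> simp_all [sg]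

end DaugC

theorem exists_ascd_not_scd
    {X : Type*} [NormedAddCommGroup X] [NormedSpace ℝ X] [CompleteSpace X]
    (h : DaugavetProperty X) :
    ∃ C : Set X, Convex ℝ C ∧ IsClosed C ∧ IsBounded C ∧ IsASCD C ∧ ¬ IsSCD C := by
  open DaugC in
  obtain ⟨y, g, hy, hg1, hg0, hgb⟩ := exists_biorth h
  obtain ⟨D, hDc, hD0, hDb, hD⟩ := exists_D h {y 0, y 1} (by simp) (by
    rintro x (rfl | rfl) <;> exact hy _)
  have hu : y 0 ∈ D := hD0 (by simp)
  have hx0 : y 1 ∈ D := hD0 (by simp)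
  obtain ⟨d, hd⟩ := hDc.exists_eq_range ⟨_, hu⟩
  have hdb : ∀ n, ‖d n‖ ≤ 1 := fun n => hDb _ (hd ▸ mem_range_self n)
  let Q : X → X := fun x => x + (1 - g 0 x) • y 0
  have hQ : ∀ x, Q x = x + (1 - g 0 x) • y 0 := fun x => rfl
  let e : ℕ × Bool → X := fun p => Q (d p.1) + (16 * sg p.2) • y (p.1 + 1)
  let E : Set X := range e
  have hQf : ∀ x, g 0 (Q x) = 1 := by intro x; simp [hQ, hg1]
  have hQg : ∀ n x, g (n + 1) (Q x) = g (n + 1) x := by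
    intro n x; simp [hQ, hg0 (n + 1) 0 (by omega)]
  have hQn : ∀ n, ‖Q (d n)‖ ≤ 6 := by
    intro n
    have h1 := norm_add_le (d n) ((1 - g 0 (d n)) • y 0)
    rw [norm_smul, Real.norm_eq_abs] at h1
    have h2 := hgb 0 (d n)
    have h3 := hdb n
    have h4 : |1 - g 0 (d n)| ≤ 5 := by
      rw [abs_le] at h2 ⊢
      constructor <;> linarith [h2.1, h2.2]
    have h5 := mul_le_mul h4 (hy 0) (norm_nonneg _) (by norm_num)
    rw [hQ]
    linarith
  have hen : ∀ p, ‖e p‖ ≤ 22 := by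
    intro p
    have h1 := norm_add_le (Q (d p.1)) ((16 * sg p.2) • y (p.1 + 1))
    rw [norm_smul, Real.norm_eq_abs, abs_mul, sg_abs] at h1
    have h2 := hQn p.1
    have h3 := hy (p.1 + 1)
    norm_num at h1
    show ‖Q (d p.1) + (16 * sg p.2) • y (p.1 + 1)‖ ≤ 22
    linarith
  set A : Set X := E ∪ (fun x => - Q x) '' D with hA
  have hAb : ∀ x ∈ A, ‖x‖ ≤ 22 := by
    rintro x (⟨p, rfl⟩ | ⟨z, hz, rfl⟩)
    · exact hen p
    · rw [hd] at hz
      obtain ⟨n, rfl⟩ := hz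
      show ‖- Q (d n)‖ ≤ 22
      rw [norm_neg]
      linarith [hQn n]
  refine ⟨closure (convexHull ℝ A), (convex_convexHull ℝ A).closure, isClosed_closure, ?_, ?_, ?_⟩
  · have : IsBounded A := isBounded_iff_forall_norm_le.2 ⟨22, hAb⟩
    exact ((isBounded_convexHull (s := A)).2 this).closure
  · let G : ℕ × Bool → X →L[ℝ] ℝ := fun p => (sg p.2 / 16) • g (p.1 + 1)
    have hGa : ∀ p x, G p x = sg p.2 / 16 * g (p.1 + 1) x := fun p x => rfl
    have hGd : ∀ p n, |G p (Q (d n))| ≤ 1 / 4 := by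
      intro p n
      rw [hGa, hQg, abs_mul, abs_div, sg_abs, abs_of_pos (by norm_num : (0 : ℝ) < 16)]
      linarith [hgb (p.1 + 1) (d n), hdb n]
    have hGe : ∀ p q, G p (e q) =
        G p (Q (d q.1)) + sg p.2 * sg q.2 * g (p.1 + 1) (y (q.1 + 1)) := by
      intro p q
      show G p (Q (d q.1) + (16 * sg q.2) • y (q.1 + 1)) = _
      rw [map_add, map_smul, hGa p (y _), smul_eq_mul]
      ring
    have hGee : ∀ p, G p (e p) = G p (Q (d p.1)) + 1 := by
      intro p
      rw [hGe, hg1, sg_mul, one_mul]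
    refine ascd_of A e (fun p => Or.inl ⟨p, rfl⟩) G ?_ 88 (by norm_num) ?_ ?_
    · intro p h0
      have h1 := hGee p
      rw [h0] at h1
      simp at h1
    · intro p x hx
      by_cases hxe : x = e p
      · subst hxe; simp
      have hn : ‖x - e p‖ ≤ 44 := by
        linarith [norm_sub_le x (e p), hAb x hx, hen p]
      have hp := abs_le.1 (hGd p p.1)
      suffices hs : 1 / 2 ≤ G p (e p) - G p x by linarith
      rw [hGee]
      rcases hx with ⟨q, rfl⟩ | ⟨z, hz, rfl⟩
      · have hq := abs_le.1 (hGd p q.1)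
        rw [hGe]
        by_cases hpq : q.1 = p.1
        · have hb : q.2 ≠ p.2 := fun hb => hxe (by rw [Prod.ext hpq hb])
          rw [sg_ne hb, hpq, hg1]
          linarith
        · rw [hg0 _ _ (by omega)]
          linarith [hp.1, hq.2]
      · rw [hd] at hz
        obtain ⟨n, rfl⟩ := hz
        have hq := abs_le.1 (hGd p n)
        show 1 / 2 ≤ G p (Q (d p.1)) + 1 - G p (- Q (d n))
        rw [map_neg]
        linarith [hp.1, hq.1]
    · intro T hT hTe
      rintro x (⟨p, rfl⟩ | ⟨z, hz, rfl⟩)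
      · exact hTe p
      · rw [hd] at hz
        obtain ⟨n, rfl⟩ := hz
        have hTc : Convex ℝ T := hT.2
        have h1 := hTc (hTe (n, true)) (hTe (n, false)) (by norm_num : (0 : ℝ) ≤ 1 / 2)
          (by norm_num : (0 : ℝ) ≤ 1 / 2) (by norm_num)
        have h2 : (1 / 2 : ℝ) • e (n, true) + (1 / 2 : ℝ) • e (n, false) = Q (d n) := by
          simp only [e, sg]
          simp only [if_true, Bool.false_eq_true, if_false]
          module
        rw [h2] at h1
        exact (hT.1.neg_mem_iff).2 h1
  · refine not_scd_of D hDb hD (y 0) (y 1) hu hx0 (1 / 4) (by norm_num) ?_ (g 0) Q hQ (hg1 0)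
      E ?_ 22 ?_
    · intro c
      have h1 := hgb 1 (y 1 + c • y 0)
      rw [map_add, map_smul, hg1, hg0 1 0 (by omega)] at h1
      simp at h1
      linarith
    · rintro _ ⟨p, rfl⟩
      show g 0 (Q (d p.1) + (16 * sg p.2) • y (p.1 + 1)) = 1
      rw [map_add, map_smul, hQf, hg0 0 _ (by omega)]
      simp
    · rintro _ ⟨p, rfl⟩
      exact hen p
end

section
/- Let X be a real Banach space and let U ⊂ X be a nonempty convex, closed, bounded, balanced set (i.e., λU ⊂ U for all real λ with |λ| ≤ 1). For a sequence {V_n : n ∈ ℕ} of nonempty subsets of U, the following are equivalent: (i) the sequence is balanced determining for U, i.e., every set B ⊂ X with B ∩ V_n ≠ ∅ for all n ∈ ℕ satisfies U ⊂ closure(absConvexHull(B)); (ii) every balanced slice of U contains one of the V_n. -/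
open Bornology Set Pointwise

variable {X : Type*} [NormedAddCommGroup X] [NormedSpace ℝ X]

/-- The balanced slice of a balanced set `U` given by `f` and `ε > 0`. -/
noncomputable def balancedSlice {X : Type*} [NormedAddCommGroup X] [NormedSpace ℝ X]
    (U : Set X) (f : X →L[ℝ] ℝ) (ε : ℝ) : Set X :=
  {x ∈ U | sSup ((fun a => |f a|) '' U) - ε < |f x|}

theorem balanced_determining_iff
    {X : Type*} [NormedAddCommGroup X] [NormedSpace ℝ X] [CompleteSpace X]
    (U : Set X) (hU : U.Nonempty) (hUc : Convex ℝ U) (hUcl : IsClosed U)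
    (hUb : IsBounded U) (hUbal : Balanced ℝ U)
    (V : ℕ → Set X) (hVne : ∀ n, (V n).Nonempty) (hVU : ∀ n, V n ⊆ U) :
    (∀ B : Set X, (∀ n, (B ∩ V n).Nonempty) → U ⊆ closure (absConvexHull ℝ B)) ↔
      ∀ (f : X →L[ℝ] ℝ), f ≠ 0 → ∀ ε : ℝ, 0 < ε →
        ∃ n, V n ⊆ balancedSlice U f ε := by
  have hbdd : ∀ f : X →L[ℝ] ℝ, BddAbove ((fun a => |f a|) '' U) := by
    intro f
    obtain ⟨R, hR⟩ := hUb.exists_norm_le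
    refine ⟨‖f‖ * R, ?_⟩
    rintro _ ⟨a, ha, rfl⟩
    exact (f.le_opNorm a).trans (mul_le_mul_of_nonneg_left (hR a ha) (norm_nonneg f))
  constructor
  · intro h f hf ε hε
    by_contra! hcon
    have hx : ∀ n, ∃ x ∈ V n, |f x| ≤ sSup ((fun a => |f a|) '' U) - ε := by
      intro n
      obtain ⟨x, hxV, hx⟩ := Set.not_subset.1 (hcon n)
      refine ⟨x, hxV, ?_⟩
      by_contra! hlt
      exact hx ⟨hVU n hxV, hlt⟩
    choose x hxV hx using hx
    set S := sSup ((fun a => |f a|) '' U) with hS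
    have hsub := h (Set.range x) (fun n => ⟨x n, ⟨n, rfl⟩, hxV n⟩)
    have hT : closure (absConvexHull ℝ (Set.range x)) ⊆ {y | |f y| ≤ S - ε} := by
      apply closure_minimal
      · apply absConvexHull_min
        · rintro _ ⟨n, rfl⟩
          exact hx n
        · constructor
          · rw [balanced_iff_smul_mem]
            intro a ha y hy
            simp only [Set.mem_ofPred_eq, map_smul, smul_eq_mul, abs_mul] at hy ⊢
            have ha' : |a| ≤ 1 := ha
            nlinarith [abs_nonneg (f y), abs_nonneg a]
          · intro y hy z hz a b ha hb hab
            simp only [Set.mem_ofPred_eq, map_add, map_smul, smul_eq_mul] at hy hz ⊢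
            rw [abs_le] at hy hz ⊢
            have e : b = 1 - a := by linarith
            subst e
            constructor <;> nlinarith
      · exact isClosed_le (by fun_prop) continuous_const
    have : S ≤ S - ε := by
      apply csSup_le (hU.image _)
      rintro _ ⟨a, ha, rfl⟩
      exact hT (hsub ha)
    linarith
  · intro h B hB x hxU
    by_contra hx
    obtain ⟨f, u, hC, hu⟩ := geometric_hahn_banach_closed_point
      (convex_absConvexHull (𝕜 := ℝ) (s := B)).closure isClosed_closure hx
    have hCB : ∀ b ∈ B, |f b| < u := by
      intro b hb
      have h1 : b ∈ absConvexHull ℝ B := subset_absConvexHull hb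
      have h2 : -b ∈ absConvexHull ℝ B := by
        have := (balanced_absConvexHull (𝕜 := ℝ) (s := B)).smul_mem
          (show ‖(-1 : ℝ)‖ ≤ 1 by simp) h1
        simpa using this
      have h3 := hC _ (subset_closure h1)
      have h4 := hC _ (subset_closure h2)
      rw [map_neg] at h4
      exact abs_lt.2 ⟨by linarith, h3⟩
    obtain ⟨b0, hb0, _⟩ := hB 0
    have hu0 : 0 < u := (abs_nonneg _).trans_lt (hCB b0 hb0)
    have hf : f ≠ 0 := by
      rintro rfl
      simp at hu
      linarith
    have hS : f x ≤ sSup ((fun a => |f a|) '' U) :=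
      (le_abs_self _).trans (le_csSup (hbdd f) ⟨x, hxU, rfl⟩)
    obtain ⟨n, hn⟩ := h f hf (sSup ((fun a => |f a|) '' U) - u) (by linarith)
    obtain ⟨b, hb, hbV⟩ := hB n
    have h5 := (hn hbV).2
    have h6 := hCB b hb
    linarith
end

section
/- Let X be a real Banach space and let U ⊂ X be a convex, closed, bounded, balanced set (i.e., λU ⊂ U for all real λ with |λ| ≤ 1). If U is aSCD, then U is SCD. -/
open Bornology Set Pointwise

variable {X : Type*} [NormedAddCommGroup X] [NormedSpace ℝ X]

lemma neg_isSlice {X : Type*} [NormedAddCommGroup X] [NormedSpace ℝ X]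
    (U : Set X) (hn : ∀ x ∈ U, -x ∈ U) (S : Set X) (hS : IsSlice U S) : IsSlice U (-S) := by
  obtain ⟨hne, f, hf, ε, hε, rfl⟩ := hS
  refine ⟨hne.neg, -f, neg_ne_zero.mpr hf, ε, hε, ?_⟩
  have himg : (fun x => (-f) x) '' U = f '' U := by
    ext t
    constructor
    · rintro ⟨x, hx, rfl⟩
      exact ⟨-x, hn x hx, by simp⟩
    · rintro ⟨x, hx, rfl⟩
      exact ⟨-x, hn x hx, by simp⟩
  ext x
  have hx : -x ∈ U ↔ x ∈ U := ⟨fun h => by simpa using hn _ h, hn x⟩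
  have himg' : (⇑(-f)) '' U = f '' U := himg
  simp only [sliceSet, Set.mem_neg, Set.mem_ofPred_eq, himg', hx]
  simp

lemma slice_sign {X : Type*} [NormedAddCommGroup X] [NormedSpace ℝ X]
    (S : Set X) (hS : Convex ℝ S) (f : X →L[ℝ] ℝ) (u : ℝ) (hu : 0 ≤ u)
    (h : ∀ s ∈ S, u < |f s|) : (∀ s ∈ S, u < f s) ∨ (∀ s ∈ S, f s < -u) := by
  by_contra hc
  push Not at hc
  obtain ⟨⟨a, ha, hfa⟩, b, hb, hfb⟩ := hc
  have h1 : f a < 0 := by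
    by_contra h0
    have := h a ha
    rw [abs_of_nonneg (not_lt.mp h0)] at this
    linarith
  have h2 : 0 < f b := by
    by_contra h0
    have := h b hb
    rw [abs_of_nonpos (not_lt.mp h0)] at this
    linarith
  have hpre := hS.isPreconnected.image f f.continuous.continuousOn
  have := hpre.ordConnected.out (mem_image_of_mem f ha) (mem_image_of_mem f hb)
    (show (0 : ℝ) ∈ Icc (f a) (f b) from ⟨h1.le, h2.le⟩)
  obtain ⟨c, hc, hc0⟩ := this
  have := h c hc
  rw [hc0, abs_zero] at this
  linarith

theorem isSCD_of_isASCD_balanced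
    {X : Type*} [NormedAddCommGroup X] [NormedSpace ℝ X] [CompleteSpace X]
    (U : Set X) (hUc : Convex ℝ U) (hUcl : IsClosed U) (hUb : IsBounded U)
    (hUbal : Balanced ℝ U) (hA : IsASCD U) :
    IsSCD U := by
  have hn : ∀ x ∈ U, -x ∈ U := fun x hx => hUbal.neg_mem_iff.mpr hx
  obtain ⟨V, hV, hdet⟩ := hA
  refine ⟨fun n => if n % 2 = 0 then V (n / 2) else -V (n / 2), ?_, ?_⟩
  · intro n
    dsimp only
    split_ifs
    · exact hV _
    · exact neg_isSlice U hn _ (hV _)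
  intro B hB x hx
  have hB1 : ∀ n, (B ∩ V n).Nonempty := fun n => by
    have := hB (2 * n)
    simpa using this
  have hB2 : ∀ n, (B ∩ -V n).Nonempty := fun n => by
    have := hB (2 * n + 1)
    have e1 : (2 * n + 1) % 2 = 1 := by omega
    have e2 : (2 * n + 1) / 2 = n := by omega
    simpa [e1, e2] using this
  by_contra hxB
  obtain ⟨f, u, hfu, hux⟩ := geometric_hahn_banach_closed_point
    (convex_convexHull ℝ B).closure isClosed_closure hxB
  have hfB : ∀ b ∈ B, f b < u := fun b hb => hfu b (subset_closure (subset_convexHull ℝ B hb))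
  have hVU : ∀ n, V n ⊆ U ∧ Convex ℝ (V n) := by
    intro n
    obtain ⟨-, g, -, ε, -, he⟩ := hV n
    rw [he]
    exact ⟨fun y hy => hy.1, hUc.inter (convex_halfSpace_gt g.toLinearMap.isLinear _)⟩
  by_cases hpos : ∃ y ∈ U, 0 < f y
  · obtain ⟨y, hy, hfy⟩ := hpos
    have hz : ∃ z ∈ U, max u 0 < f z := by
      rcases le_total (f x) (f y) with h | h
      · exact ⟨y, hy, max_lt (hux.trans_le h) hfy⟩
      · exact ⟨x, hx, max_lt hux (hfy.trans_le h)⟩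
    obtain ⟨z, hzU, hfz⟩ := hz
    have key : ∃ n, ∀ s ∈ V n, max u 0 < |f s| := by
      by_contra hc
      push Not at hc
      choose s hs hfs using hc
      have h1 := hdet (range s) (fun n => ⟨s n, mem_range_self n, hs n⟩) hzU
      have hconv : AbsConvex ℝ {w : X | |f w| ≤ max u 0} := by
        constructor
        · intro a ha
          rintro _ ⟨w, hw, rfl⟩
          simp only [mem_ofPred_eq] at hw ⊢
          rw [map_smul, smul_eq_mul, abs_mul]
          rw [Real.norm_eq_abs] at ha
          calc |a| * |f w| ≤ 1 * |f w| := by gcongr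
            _ ≤ _ := by simpa using hw
        · have : {w : X | |f w| ≤ max u 0} = f.toLinearMap ⁻¹' (Icc (-(max u 0)) (max u 0)) := by
            ext w
            exact (abs_le : |f w| ≤ max u 0 ↔ _)
          rw [this]
          exact (convex_Icc _ _).linear_preimage _
      have hcl : IsClosed {w : X | |f w| ≤ max u 0} :=
        isClosed_le (f.continuous.abs) continuous_const
      have h2 : absConvexHull ℝ (range s) ⊆ {w : X | |f w| ≤ max u 0} :=
        absConvexHull_min (by rintro _ ⟨n, rfl⟩; exact hfs n) hconv
      have h3 : |f z| ≤ max u 0 := closure_minimal h2 hcl h1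
      linarith [le_abs_self (f z)]
    obtain ⟨n, hkey⟩ := key
    rcases slice_sign (V n) (hVU n).2 f (max u 0) (le_max_right _ _) hkey with h | h
    · obtain ⟨b, hb, hbV⟩ := hB1 n
      linarith [h b hbV, hfB b hb, le_max_left u 0]
    · obtain ⟨b, hb, hbV⟩ := hB2 n
      have := h (-b) hbV
      rw [map_neg] at this
      linarith [hfB b hb, le_max_left u 0]
  · push Not at hpos
    obtain ⟨b, hb, hbV⟩ := hB1 0
    have h1 := hpos (-b) (hn b ((hVU 0).1 hbV))
    rw [map_neg] at h1
    linarith [hfB b hb, hpos x hx]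
end
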